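/- Let q be a prime power, let A be a subset of F_q with |A| ≥ 2, let d be an integer with 2 ≤ d ≤ |A| and d dividing q-1, and let χ_d be a multiplicative character of F_q of order d with complex values (extended by χ_d(0) = 0). Define S(d;q,A) = Σ_{γ ∈ F_q \ A} Π_{α ∈ A} ((d-1) - Σ_{j=1}^{d-1} χ_d((γ - α)^j)). Then S(d;q,A) is a real number and S(d;q,A) ≥ (d-1)^{|A|} (q - (2^{|A|-1}(|A|-2) + 1)√q - 2^{|A|} |A|). -/

import Mathlib

open Finset

theorem norm_le_of_norm_sum_pow_le (s : Multiset ℂ) {R C : ℝ} (hR : 0 < R) (N : ℕ)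
    (h : ∀ m ≥ N, ‖(s.map (· ^ m)).sum‖ ≤ C * R ^ m) : ∀ z ∈ s, ‖z‖ ≤ R := by
  classical
  intro z hz
  set p : Polynomial ℂ := ∏ w ∈ s.toFinset.erase z, (Polynomial.X - Polynomial.C w) with hp
  have hpz : p.eval z ≠ 0 := by
    rw [hp, Polynomial.eval_prod, Finset.prod_ne_zero_iff]
    intro w hw
    simpa [sub_eq_zero] using (Finset.ne_of_mem_erase hw).symm
  have hpw : ∀ w ∈ s.toFinset, w ≠ z → p.eval w = 0 := by
    intro w hw hne
    rw [hp, Polynomial.eval_prod]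
    exact Finset.prod_eq_zero (Finset.mem_erase.2 ⟨hne, hw⟩) (by simp)
  have key : ∀ m, ∑ k ∈ range (p.natDegree + 1), p.coeff k * (s.map (· ^ (m + k))).sum
      = s.count z * (z ^ m * p.eval z) := by
    intro m
    have h1 : ∀ k, (s.map (· ^ (m + k))).sum = ∑ w ∈ s.toFinset, s.count w • w ^ (m + k) :=
      fun k => Finset.sum_multiset_map_count _ _
    simp_rw [h1, Finset.mul_sum]
    rw [Finset.sum_comm, Finset.sum_eq_single_of_mem z (Multiset.mem_toFinset.2 hz)]
    · rw [Polynomial.eval_eq_sum_range, Finset.mul_sum, Finset.mul_sum]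
      refine Finset.sum_congr rfl fun k _ => ?_
      rw [nsmul_eq_mul, pow_add]; ring
    · intro w hw hne
      have := hpw w hw hne
      rw [Polynomial.eval_eq_sum_range] at this
      calc _ = (s.count w * w ^ m) * ∑ i ∈ range (p.natDegree + 1), p.coeff i * w ^ i := by
            rw [Finset.mul_sum]
            refine Finset.sum_congr rfl fun k _ => ?_
            rw [nsmul_eq_mul, pow_add]; ring
        _ = 0 := by rw [this, mul_zero]
  set D : ℝ := ∑ k ∈ range (p.natDegree + 1), ‖p.coeff k‖ * (C * R ^ k) with hD
  have bound : ∀ m ≥ N, ‖z‖ ^ m * ‖p.eval z‖ ≤ D * R ^ m := by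
    intro m hm
    have hc : (1 : ℝ) ≤ s.count z := by exact_mod_cast Multiset.one_le_count_iff_mem.2 hz
    calc ‖z‖ ^ m * ‖p.eval z‖ ≤ s.count z * (‖z‖ ^ m * ‖p.eval z‖) :=
          le_mul_of_one_le_left (by positivity) hc
      _ = ‖(s.count z : ℂ) * (z ^ m * p.eval z)‖ := by simp
      _ ≤ ∑ k ∈ range (p.natDegree + 1), ‖p.coeff k * (s.map (· ^ (m + k))).sum‖ := by
          rw [← key]; exact norm_sum_le _ _
      _ ≤ ∑ k ∈ range (p.natDegree + 1), ‖p.coeff k‖ * (C * R ^ (m + k)) := by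
          refine Finset.sum_le_sum fun k _ => ?_
          rw [norm_mul]
          exact mul_le_mul_of_nonneg_left (h _ (by omega)) (norm_nonneg _)
      _ = D * R ^ m := by
          rw [hD, Finset.sum_mul]
          refine Finset.sum_congr rfl fun k _ => ?_
          rw [pow_add]; ring
  by_contra! hlt
  have hr : 1 < ‖z‖ / R := (one_lt_div hR).2 hlt
  have hpos : 0 < ‖p.eval z‖ := norm_pos_iff.2 hpz
  obtain ⟨n, hn⟩ := pow_unbounded_of_one_lt (D / ‖p.eval z‖) hr
  have h2 : (‖z‖ / R) ^ n ≤ (‖z‖ / R) ^ (n + N) := pow_le_pow_right₀ hr.le (by omega)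
  have h3 := bound (n + N) (by omega)
  have h4 : (‖z‖ / R) ^ (n + N) ≤ D / ‖p.eval z‖ := by
    rw [div_pow, div_le_div_iff₀ (by positivity) hpos]
    exact h3
  linarith

theorem Polynomial.exists_eq_prod_one_sub_C_mul_X (L : Polynomial ℂ) (h0 : L.coeff 0 = 1) :
    ∃ s : Multiset ℂ, s.card ≤ L.natDegree ∧
      L = (s.map fun w => 1 - Polynomial.C w * Polynomial.X).prod := by
  have hsplit := IsAlgClosed.splits L
  have hL0 : L ≠ 0 := by rintro rfl; simp at h0
  have hroot : ∀ r ∈ L.roots, r ≠ 0 := by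
    rintro r hr rfl
    have := (Polynomial.mem_roots hL0).1 hr
    rw [Polynomial.IsRoot.def, ← Polynomial.coeff_zero_eq_eval_zero, h0] at this
    exact one_ne_zero this
  refine ⟨L.roots.map (·⁻¹), by simpa using L.card_roots', ?_⟩
  have h1 : L = Polynomial.C (L.leadingCoeff * (L.roots.map fun r => -r).prod) *
      ((L.roots.map (·⁻¹)).map fun w => 1 - Polynomial.C w * Polynomial.X).prod := by
    conv_lhs => rw [hsplit.eq_prod_roots]
    rw [Polynomial.C_mul, mul_assoc]
    congr 1
    rw [Multiset.map_map, map_multiset_prod, Multiset.map_map, ← Multiset.prod_map_mul]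
    congr 1
    refine Multiset.map_congr rfl fun r hr => ?_
    have : Polynomial.C r * Polynomial.C r⁻¹ = 1 := by
      rw [← Polynomial.C_mul, mul_inv_cancel₀ (hroot r hr), Polynomial.C_1]
    simp only [Function.comp_apply, Polynomial.C_neg]
    linear_combination (-Polynomial.X) * this
  have h2 : L.leadingCoeff * (L.roots.map fun r => -r).prod = 1 := by
    have := congrArg (Polynomial.eval 0) h1
    rw [← Polynomial.coeff_zero_eq_eval_zero, h0, Polynomial.eval_mul, Polynomial.eval_C,
      Polynomial.eval_multiset_prod, Multiset.map_map] at this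
    simpa using this.symm
  conv_lhs => rw [h1]
  rw [h2, Polynomial.C_1, one_mul]

theorem derivative_prod_one_sub_mul_X (s : Multiset ℂ) :
    ((Polynomial.X * Polynomial.derivative
        (s.map fun w => 1 - Polynomial.C w * Polynomial.X).prod : Polynomial ℂ) : PowerSeries ℂ)
      = PowerSeries.mk (fun n => if n = 0 then 0 else -(s.map (· ^ n)).sum) *
        ((s.map fun w => 1 - Polynomial.C w * Polynomial.X).prod : Polynomial ℂ) := by
  induction s using Multiset.induction_on with
  | empty =>
    have : PowerSeries.mk (fun n => if n = 0 then (0 : ℂ) else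
        -((0 : Multiset ℂ).map (· ^ n)).sum) = 0 := by
      ext n; simp
    rw [this]; simp
  | cons a s ih =>
    have hmk : PowerSeries.mk (fun n => if n = 0 then (0 : ℂ) else -((a ::ₘ s).map (· ^ n)).sum)
        = PowerSeries.mk (fun n => if n = 0 then (0 : ℂ) else -(s.map (· ^ n)).sum)
          - PowerSeries.mk (fun n => if n = 0 then (0 : ℂ) else a ^ n) := by
      ext n
      by_cases hn : n = 0
      · simp [hn]
      · simp [hn]
        ring
    have hgeom : PowerSeries.mk (fun n => if n = 0 then (0 : ℂ) else a ^ n) *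
        ((1 - Polynomial.C a * Polynomial.X : Polynomial ℂ) : PowerSeries ℂ) =
        ((Polynomial.C a * Polynomial.X : Polynomial ℂ) : PowerSeries ℂ) := by
      ext n
      have : ((1 - Polynomial.C a * Polynomial.X : Polynomial ℂ) : PowerSeries ℂ) =
        1 - PowerSeries.C a * PowerSeries.X := by simp
      rw [this, mul_sub, mul_one, ← mul_assoc]
      rcases n with _ | n
      · simp
      · rcases n with _ | n
        · simp [PowerSeries.coeff_succ_mul_X]
        · simp [PowerSeries.coeff_succ_mul_X]
          ring
    rw [hmk, Multiset.map_cons, Multiset.prod_cons, Polynomial.derivative_mul]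
    push_cast at ih hgeom ⊢
    simp only [Polynomial.derivative_sub, Polynomial.derivative_one, Polynomial.derivative_mul,
      Polynomial.derivative_C, Polynomial.derivative_X] at ih hgeom ⊢
    push_cast at ih hgeom ⊢
    linear_combination (1 - PowerSeries.C a * PowerSeries.X) * ih + (((s.map fun w => 1 - Polynomial.C w * Polynomial.X).prod : Polynomial ℂ) : PowerSeries ℂ) * hgeom

theorem exists_multiset_of_newton (M S : ℕ → ℂ) (k : ℕ) (hM0 : M 0 = 1)
    (hM : ∀ n, k ≤ n → M n = 0)
    (hN : ∀ n, n * M n = ∑ p ∈ antidiagonal n, S p.1 * M p.2) :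
    ∃ s : Multiset ℂ, s.card ≤ k - 1 ∧ ∀ n, 1 ≤ n → S n = -(s.map (· ^ n)).sum := by
  set L : Polynomial ℂ := ∑ n ∈ range k, Polynomial.monomial n (M n) with hL
  have hcoeff : ∀ n, L.coeff n = M n := by
    intro n
    rw [hL, Polynomial.finsetSum_coeff]
    simp only [Polynomial.coeff_monomial, Finset.sum_ite_eq', Finset.mem_range]
    split_ifs with h
    · rfl
    · exact (hM n (by omega)).symm
  have hdeg : L.natDegree ≤ k - 1 := by
    rw [Polynomial.natDegree_le_iff_coeff_eq_zero]
    intro n hn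
    rw [hcoeff, hM n (by omega)]
  obtain ⟨s, hs, hLs⟩ := L.exists_eq_prod_one_sub_C_mul_X (by rw [hcoeff, hM0])
  refine ⟨s, hs.trans hdeg, fun n hn => ?_⟩
  have h1 := derivative_prod_one_sub_mul_X s
  rw [← hLs] at h1
  have h2 : ((Polynomial.X * Polynomial.derivative L : Polynomial ℂ) : PowerSeries ℂ) = PowerSeries.mk S * L := by
    ext n
    rw [PowerSeries.coeff_mul]
    simp only [PowerSeries.coeff_mk, Polynomial.coeff_coe, hcoeff]
    rw [← hN]
    rcases n with _ | n
    · simp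
    · rw [Polynomial.coeff_X_mul, Polynomial.coeff_derivative, hcoeff]; push_cast; ring
  have hLne : (L : PowerSeries ℂ) ≠ 0 := by
    intro h
    have := congrArg (PowerSeries.coeff 0) h
    rw [Polynomial.coeff_coe, hcoeff, hM0] at this
    simp at this
  have h3 := mul_right_cancel₀ hLne (h2.symm.trans h1)
  have := congrArg (PowerSeries.coeff n) h3
  simpa [Nat.one_le_iff_ne_zero.1 hn] using this

theorem norm_le_of_newton (M S : ℕ → ℂ) (k : ℕ) (hM0 : M 0 = 1)
    (hM : ∀ n, k ≤ n → M n = 0)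
    (hN : ∀ n, n * M n = ∑ p ∈ antidiagonal n, S p.1 * M p.2)
    {q C : ℝ} (hq : 0 < q) (N : ℕ) (hS : ∀ m ≥ N, ‖S (2 * m)‖ ≤ C * q ^ m) :
    ‖S 1‖ ≤ ((k - 1 : ℕ) : ℝ) * Real.sqrt q := by
  obtain ⟨s, hs, h⟩ := exists_multiset_of_newton M S k hM0 hM hN
  have h1 : ∀ z ∈ s.map (· ^ 2), ‖z‖ ≤ q := by
    refine norm_le_of_norm_sum_pow_le _ (C := C) hq (N + 1) fun m hm => ?_
    rw [Multiset.map_map]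
    have := hS m (by omega)
    rw [h _ (by omega), norm_neg] at this
    simpa [Function.comp_def, pow_mul] using this
  have h2 : ∀ z ∈ s, ‖z‖ ≤ Real.sqrt q := by
    intro z hz
    have := h1 (z ^ 2) (Multiset.mem_map_of_mem _ hz)
    rw [norm_pow] at this
    exact Real.le_sqrt_of_sq_le this
  rw [h 1 le_rfl, norm_neg]
  calc _ ≤ ((s.map (· ^ 1)).map (‖·‖)).sum := norm_multiset_sum_le _
    _ ≤ ((s.map (· ^ 1)).map (‖·‖)).card • Real.sqrt q := by
        refine Multiset.sum_le_card_nsmul _ _ ?_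
        intro x hx
        simp only [pow_one, Multiset.map_id', Multiset.mem_map] at hx
        obtain ⟨z, hz, rfl⟩ := hx
        exact h2 z hz
    _ ≤ _ := by
        rw [nsmul_eq_mul]
        refine mul_le_mul_of_nonneg_right ?_ (Real.sqrt_nonneg _)
        simpa using hs

theorem exists_algebraMap_mul_pow_card {L Ω : Type*} [Field L] [Field Ω] [Algebra L Ω] {d : ℕ}
    {ζ : L} (hζ : IsPrimitiveRoot ζ d) (hd : 0 < d) {u : Ω} (hu : u ≠ 0) (s : Multiset Ω)
    (hs : ∀ β ∈ s, β ^ d = u ^ d) :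
    ∃ c : L, c ≠ 0 ∧ s.prod = algebraMap L Ω c * u ^ s.card := by
  induction s using Multiset.induction_on with
  | empty => exact ⟨1, one_ne_zero, by simp⟩
  | cons β s ih =>
    obtain ⟨c, hc, h⟩ := ih fun x hx => hs x (Multiset.mem_cons_of_mem hx)
    have hβ := hs β (Multiset.mem_cons_self _ _)
    have : NeZero d := ⟨hd.ne'⟩
    have h1 : (β / u) ^ d = 1 := by rw [div_pow, hβ, div_self (pow_ne_zero _ hu)]
    obtain ⟨i, -, hi⟩ := (hζ.map_of_injective (algebraMap L Ω).injective).eq_pow_of_pow_eq_one h1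
    refine ⟨ζ ^ i * c, mul_ne_zero (pow_ne_zero _ (hζ.ne_zero hd.ne')) hc, ?_⟩
    rw [Multiset.prod_cons, h, Multiset.card_cons, map_mul, map_pow, hi]
    field_simp
    ring

theorem le_natDegree_minpoly_of_pow_eq {L Ω : Type*} [Field L] [Field Ω] [Algebra L Ω]
    [IsAlgClosed Ω] {d : ℕ} {ζ : L} (hζ : IsPrimitiveRoot ζ d) (hd : 0 < d) {u : Ω} {a : L}
    (ha0 : a ≠ 0) (hu : u ^ d = algebraMap L Ω a)
    (ha : ∀ r, r ∣ d → ∀ v : L, v ^ r = a → r = 1) :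
    d ≤ (minpoly L u).natDegree := by
  have hu0 : u ≠ 0 := by
    rintro rfl
    rw [zero_pow hd.ne'] at hu
    exact ha0 ((map_eq_zero _).1 hu.symm)
  have hint : IsIntegral L u := IsIntegral.of_pow hd (hu ▸ isIntegral_algebraMap)
  have hdvd : minpoly L u ∣ Polynomial.X ^ d - Polynomial.C a :=
    minpoly.dvd _ _ (by simp [hu])
  set e := (minpoly L u).natDegree with he
  set P := (minpoly L u).map (algebraMap L Ω) with hP
  have hPs : P.Splits := IsAlgClosed.splits P
  have hPm : P.Monic := (minpoly.monic hint).map _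
  have hPd : P.natDegree = e := Polynomial.natDegree_map _
  obtain ⟨c, hc, hprod⟩ := exists_algebraMap_mul_pow_card hζ hd hu0 P.roots (by
    intro β hβ
    have h1 : (minpoly L u).aeval β = 0 := by
      have := (Polynomial.mem_roots hPm.ne_zero).1 hβ
      rwa [hP, Polynomial.IsRoot.def, Polynomial.eval_map_algebraMap] at this
    have h2 : (Polynomial.X ^ d - Polynomial.C a : Polynomial L).aeval β = 0 := by
      obtain ⟨g, hg⟩ := hdvd
      rw [hg, map_mul, h1, zero_mul]
    rw [hu]
    simpa [sub_eq_zero] using h2)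
  have hcard : P.roots.card = e := by rw [← hPs.natDegree_eq_card_roots, hPd]
  have hcoeff := hPs.coeff_zero_eq_prod_roots_of_monic hPm
  rw [hprod, hcard, hPd, hP, Polynomial.coeff_map] at hcoeff
  have hue : ∃ v : L, algebraMap L Ω v = u ^ e := by
    refine ⟨(-1) ^ e * (minpoly L u).coeff 0 / c, ?_⟩
    rw [map_div₀, map_mul, hcoeff, div_eq_iff (by simpa using hc)]
    simp only [map_pow, map_neg, map_one]
    rw [← mul_assoc, ← mul_pow]
    simp [mul_comm]
  obtain ⟨v, hv⟩ := hue
  have hg : ∃ t : L, algebraMap L Ω t = u ^ (Nat.gcd e d) := by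
    refine ⟨v ^ (Nat.gcdA e d) * a ^ (Nat.gcdB e d), ?_⟩
    rw [map_mul, map_zpow₀, map_zpow₀, hv, ← hu, ← zpow_natCast, ← zpow_natCast, ← zpow_natCast,
      ← zpow_mul, ← zpow_mul, ← zpow_add₀ hu0, ← Nat.gcd_eq_gcd_ab]
  obtain ⟨t, ht⟩ := hg
  have hgd : Nat.gcd e d * (d / Nat.gcd e d) = d := Nat.mul_div_cancel' (Nat.gcd_dvd_right e d)
  have h1 : d / Nat.gcd e d = 1 := by
    refine ha _ (Nat.div_dvd_of_dvd (Nat.gcd_dvd_right e d)) t ?_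
    apply (algebraMap L Ω).injective
    rw [map_pow, ht, ← pow_mul, hgd, hu]
  have h2 : d ∣ e := by
    have : Nat.gcd e d = d := by rw [h1, mul_one] at hgd; exact hgd
    rw [← this]; exact Nat.gcd_dvd_left e d
  exact Nat.le_of_dvd (minpoly.natDegree_pos hint) h2

open Polynomial in
theorem dvd_of_pow_mul_eq {K ι : Type*} [Field K] (s : Finset ι) (α : ι → K)
    (hα : Set.InjOn α s) (e : ι → ℕ) {i : ι} (hi : i ∈ s) {r : ℕ}
    (A B : K[X][X]) (hB : B ≠ 0)
    (h : A ^ r * C (∏ i ∈ s, (X - C (α i)) ^ e i) =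
      B ^ r * (∏ i ∈ s, (X - C (α i)) ^ e i).map C) : r ∣ e i := by
  classical
  set f : K[X] := ∏ i ∈ s, (X - C (α i)) ^ e i with hf
  have hfm : f.Monic := monic_prod_of_monic _ _ fun i _ => (monic_X_sub_C _).pow _
  have hCf : (C f : K[X][X]) ≠ 0 := by simpa using hfm.ne_zero
  have hfC : (f.map C : K[X][X]) ≠ 0 := (hfm.map C).ne_zero
  have hA : r ≠ 0 → A ≠ 0 := by
    rintro hr rfl
    rw [zero_pow hr, zero_mul] at h
    exact mul_ne_zero (pow_ne_zero _ hB) hfC h.symm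
  have hroots : (f.map (C : K →+* K[X])).rootMultiplicity (C (α i)) = e i := by
    rw [hf, Polynomial.map_prod, ← count_roots, roots_prod _ _ (by
      rw [← Polynomial.map_prod]; exact hfC), Multiset.count_bind]
    simp only [Polynomial.map_pow, Polynomial.map_sub, map_X, map_C, roots_pow, roots_X_sub_C,
      Multiset.count_nsmul, Multiset.count_singleton]
    change ∑ j ∈ s, _ = _
    rw [Finset.sum_eq_single_of_mem i hi]
    · simp
    · intro j hj hne
      rw [if_neg, mul_zero]
      intro hh
      exact hne (hα hj hi (C_injective hh).symm)
  rcases eq_or_ne r 0 with rfl | hr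
  · rw [pow_zero, pow_zero, one_mul, one_mul] at h
    rw [← h, rootMultiplicity_C] at hroots
    rw [← hroots]
  have hAr := pow_ne_zero r (hA hr)
  have := congrArg (rootMultiplicity (C (α i))) h
  rw [rootMultiplicity_mul (mul_ne_zero hAr hCf),
    rootMultiplicity_mul (mul_ne_zero (pow_ne_zero _ hB) hfC), hroots, rootMultiplicity_C,
    ← count_roots, ← count_roots, roots_pow, roots_pow, Multiset.count_nsmul,
    Multiset.count_nsmul, add_zero] at this
  exact (Nat.dvd_add_right (Dvd.intro _ rfl)).1 (this ▸ Dvd.intro _ rfl)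

/-- The matrix of multiplication by `∑ i, H i * u ^ i`, scaled by `x`, in the basis `u ^ k`
of the algebra `R[u]` defined by `x * u ^ d = z`. -/
def twistedCirculant {R : Type*} [CommRing R] {d : ℕ} (x z : R) (H : Fin d → R) :
    Matrix (Fin d) (Fin d) R :=
  fun j k => (if j ≤ k then x else z) * H (k - j)

theorem sum_map_twistedCirculant {R S : Type*} [CommRing R] [CommRing S] {d : ℕ} (φ : R →+* S)
    (x z : R) (H : Fin d → R) (w : S) (hw : φ x * w ^ d = φ z) (j : Fin d) :
    ∑ k, φ (twistedCirculant x z H j k) * w ^ (k : ℕ) =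
      φ x * w ^ (j : ℕ) * ∑ i, φ (H i) * w ^ (i : ℕ) := by
  have : NeZero d := ⟨by rintro rfl; exact j.elim0⟩
  rw [Finset.mul_sum, ← Equiv.sum_comp (Equiv.subRight j)
    fun i => φ x * w ^ (j : ℕ) * (φ (H i) * w ^ (i : ℕ))]
  refine Finset.sum_congr rfl fun k _ => ?_
  rw [Equiv.subRight_apply, twistedCirculant, map_mul]
  split_ifs with h
  · have h1 : (k : ℕ) = j + (k - j : Fin d) := by
      rw [Fin.sub_val_of_le h]; have : (j : ℕ) ≤ k := h; omega
    rw [h1, pow_add]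
    ring
  · have h1 : (k : ℕ) + d = j + (k - j : Fin d) := by
      rw [Fin.coe_sub_iff_lt.2 (not_le.1 h)]; have := j.2; omega
    calc _ = φ (H (k - j)) * (φ x * w ^ ((k : ℕ) + d)) := by rw [pow_add, ← hw]; ring
      _ = _ := by rw [h1, pow_add]; ring

theorem det_twistedCirculant_eq_zero {R S : Type*} [CommRing R] [CommRing S] [IsDomain S]
    {d : ℕ} [NeZero d] (φ : R →+* S) (x z : R) (H : Fin d → R) (w : S)
    (hw : φ x * w ^ d = φ z) (h : ∑ i, φ (H i) * w ^ (i : ℕ) = 0) :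
    φ (twistedCirculant x z H).det = 0 := by
  rw [RingHom.map_det]
  refine Matrix.exists_mulVec_eq_zero_iff.1 ⟨fun k => w ^ (k : ℕ), ?_, ?_⟩
  · intro h0
    simpa using congrFun h0 0
  · ext j
    have := sum_map_twistedCirculant φ x z H w hw j
    rw [h, mul_zero] at this
    simpa [Matrix.mulVec, dotProduct] using this

theorem eq_zero_of_det_twistedCirculant {R S : Type*} [CommRing R] [IsDomain R] [CommRing S]
    [IsDomain S] {d : ℕ} (φ : R →+* S) (x z : R) (H : Fin d → R) (u : S)
    (hw : φ x * u ^ d = φ z) (hx : φ x ≠ 0)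
    (hli : ∀ c : Fin d → R, ∑ i, φ (c i) * u ^ (i : ℕ) = 0 → c = 0)
    (hdet : (twistedCirculant x z H).det = 0) : H = 0 := by
  obtain ⟨r, hr, h⟩ := Matrix.exists_vecMul_eq_zero_iff.2 hdet
  have h1 : φ x * (∑ j, φ (r j) * u ^ (j : ℕ)) * (∑ i, φ (H i) * u ^ (i : ℕ)) = 0 := by
    have h2 : ∑ k, φ ((Matrix.vecMul r (twistedCirculant x z H)) k) * u ^ (k : ℕ) = 0 := by
      simp [h]
    rw [← h2]
    simp only [Matrix.vecMul, dotProduct, map_sum, map_mul, Finset.sum_mul, Finset.mul_sum]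
    conv_rhs => rw [Finset.sum_comm]
    conv_lhs => rw [Finset.sum_comm]
    refine Finset.sum_congr rfl fun j _ => ?_
    have := sum_map_twistedCirculant φ x z H u hw j
    calc _ = φ (r j) * (φ x * u ^ (j : ℕ) * ∑ i, φ (H i) * u ^ (i : ℕ)) := by
          simp only [Finset.mul_sum]
          refine Finset.sum_congr rfl fun i _ => by ring
      _ = _ := by
          rw [← this, Finset.mul_sum]
          refine Finset.sum_congr rfl fun i _ => by ring
  rcases mul_eq_zero.1 h1 with h2 | h2
  · rcases mul_eq_zero.1 h2 with h3 | h3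
    · exact absurd h3 hx
    · exact absurd (hli r h3) hr
  · exact hli H h2

open Polynomial in
theorem natDegree_det_le {R : Type*} [CommRing R] {d n : ℕ} (M : Matrix (Fin d) (Fin d) R[X])
    (h : ∀ i j, (M i j).natDegree ≤ n) : M.det.natDegree ≤ d * n := by
  rw [Matrix.det_apply]
  refine natDegree_sum_le_of_forall_le _ _ fun σ _ => ?_
  refine (natDegree_smul_le _ _).trans ((natDegree_prod_le _ _).trans ?_)
  refine (Finset.sum_le_sum fun i _ => h (σ i) i).trans ?_
  simp

open Polynomial in
theorem eq_zero_of_eval₂_expand_eq_zero {K : Type*} [Field K] {B : ℕ} (P : K[X][X])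
    (hP : P.natDegree < B) (h : P.eval₂ (expand K B : K[X] →+* K[X]) X = 0) : P = 0 := by
  ext r t
  have hB : 0 < B := by omega
  rcases lt_or_ge P.natDegree r with hr | hr
  · simp [coeff_eq_zero_of_natDegree_lt hr]
  have h1 := congrArg (fun g => coeff g (t * B + r)) h
  simp only [eval₂_eq_sum_range, finsetSum_coeff, coeff_zero] at h1
  rw [Finset.sum_eq_single_of_mem r (by simp; omega)] at h1
  · rw [coeff_mul_X_pow] at h1
    simpa [coeff_expand_mul hB] using h1
  · intro j hj hne
    rw [coeff_mul_X_pow']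
    split_ifs with hle
    · simp only [RingHom.coe_coe, coeff_expand hB]
      rw [if_neg]
      simp only [Finset.mem_range] at hj
      rintro ⟨c, hc⟩
      have : t * B + r = c * B + j := by rw [mul_comm c]; omega
      have h2 := congrArg (· % B) this
      simp only [Nat.mul_add_mod', Nat.mod_eq_of_lt (show r < B by omega), Nat.mod_eq_of_lt (show j < B by omega)] at h2
      exact hne h2.symm
    · rfl

open Polynomial in
theorem linearIndependent_root_of_prod {K ι : Type*} [Field K] (s : Finset ι) (α : ι → K)
    (hα : Set.InjOn α s) (e : ι → ℕ) {d : ℕ} (hd : 0 < d) {ζ : K} (hζ : IsPrimitiveRoot ζ d)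
    (he : ∀ r, r ∣ d → (∀ i ∈ s, r ∣ e i) → r = 1) {f : K[X]}
    (hf : f = ∏ i ∈ s, (X - C (α i)) ^ e i) :
    ∃ u : AlgebraicClosure (FractionRing K[X][X]),
      algebraMap K[X][X] (AlgebraicClosure (FractionRing K[X][X])) (f.map C) ≠ 0 ∧
      algebraMap K[X][X] _ (f.map C) * u ^ d = algebraMap K[X][X] _ (C f) ∧
      ∀ c : Fin d → K[X][X], ∑ i, algebraMap K[X][X] _ (c i) * u ^ (i : ℕ) = 0 → c = 0 := by
  set L := FractionRing K[X][X]
  set Ω := AlgebraicClosure L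
  have hfm : f.Monic := hf ▸ monic_prod_of_monic _ _ fun i _ => (monic_X_sub_C _).pow _
  have hCf : (C f : K[X][X]) ≠ 0 := by simpa using hfm.ne_zero
  have hfC : (f.map C : K[X][X]) ≠ 0 := (hfm.map C).ne_zero
  have hinj : Function.Injective (algebraMap K[X][X] L) := IsFractionRing.injective _ _
  have hinjΩ : Function.Injective (algebraMap L Ω) := (algebraMap L Ω).injective
  have hC : Function.Injective (C : K →+* K[X]) := C_injective
  have hζL : IsPrimitiveRoot (algebraMap K[X][X] L (C (C ζ))) d :=
    ((hζ.map_of_injective hC).map_of_injective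
      (C_injective : Function.Injective (C : K[X] →+* K[X][X]))).map_of_injective hinj
  have hfL : algebraMap K[X][X] L (f.map C) ≠ 0 := by simpa using hfC
  have hfL' : algebraMap K[X][X] L (C f) ≠ 0 := (map_ne_zero_iff _ hinj).2 hCf
  set a : L := algebraMap K[X][X] L (C f) / algebraMap K[X][X] L (f.map C) with ha
  obtain ⟨u, hu⟩ := IsAlgClosed.exists_pow_nat_eq (algebraMap L Ω a) hd
  have hmin := le_natDegree_minpoly_of_pow_eq hζL hd (div_ne_zero hfL' hfL) hu (by
    intro r hr v hv
    refine he r hr fun i hi => ?_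
    obtain ⟨A, B, hB, rfl⟩ := IsFractionRing.div_surjective (A := K[X][X]) v
    have hB0 : B ≠ 0 := nonZeroDivisors.ne_zero hB
    have hBL : algebraMap K[X][X] L B ≠ 0 := (map_ne_zero_iff _ hinj).2 hB0
    have hA0 : r ≠ 0 := by rintro rfl; exact hd.ne' (Nat.eq_zero_of_zero_dvd hr)
    have hAL : A ≠ 0 := by
      rintro rfl
      rw [map_zero, zero_div, zero_pow hA0] at hv
      exact div_ne_zero hfL' hfL hv.symm
    refine dvd_of_pow_mul_eq s α hα e hi B A hAL ?_
    rw [← hf]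
    apply hinj
    rw [div_pow, div_eq_div_iff (pow_ne_zero _ hBL) hfL] at hv
    simp only [map_mul, map_pow]
    rw [hv, mul_comm])
  refine ⟨u, ?_, ?_, ?_⟩
  · rw [IsScalarTower.algebraMap_apply K[X][X] L Ω]
    exact (map_ne_zero_iff _ hinjΩ).2 hfL
  · rw [hu, IsScalarTower.algebraMap_apply K[X][X] L Ω, IsScalarTower.algebraMap_apply K[X][X] L Ω,
      ← map_mul, ha, mul_div_cancel₀ _ hfL]
  · intro c hc
    have h1 : (∑ i : Fin d, C (algebraMap K[X][X] L (c i)) * X ^ (i : ℕ) : L[X]) = 0 := by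
      by_contra hne
      have h2 : aeval u (∑ i : Fin d, C (algebraMap K[X][X] L (c i)) * X ^ (i : ℕ) : L[X]) = 0 := by
        rw [map_sum, ← hc]
        refine Finset.sum_congr rfl fun i _ => ?_
        rw [map_mul, aeval_C, map_pow, aeval_X, ← IsScalarTower.algebraMap_apply K[X][X] L Ω]
      have h3 := natDegree_le_of_dvd (minpoly.dvd _ _ h2) hne
      have h4 : (∑ i : Fin d, C (algebraMap K[X][X] L (c i)) * X ^ (i : ℕ) : L[X]).natDegree
          ≤ d - 1 := by
        refine natDegree_sum_le_of_forall_le _ _ fun i _ => ?_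
        exact (natDegree_C_mul_X_pow_le _ _).trans (by omega)
      omega
    ext1 i
    have h2 := congrArg (fun p => coeff p (i : ℕ)) h1
    simp only [finsetSum_coeff, coeff_C_mul, coeff_X_pow, coeff_zero, mul_ite, mul_one,
      mul_zero] at h2
    rw [Finset.sum_eq_single_of_mem i (mem_univ _)] at h2
    · simpa using h2
    · intro j _ hj
      rw [if_neg]
      exact fun h => hj (Fin.ext h.symm)

open Polynomial in
theorem eq_zero_of_sum_eval₂_expand_eq_zero {K ι : Type*} [Field K] (s : Finset ι) (α : ι → K)
    (hα : Set.InjOn α s) (e : ι → ℕ) {d : ℕ} (hd : 0 < d) {ζ : K} (hζ : IsPrimitiveRoot ζ d)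
    (he : ∀ r, r ∣ d → (∀ i ∈ s, r ∣ e i) → r = 1) {f : K[X]}
    (hf : f = ∏ i ∈ s, (X - C (α i)) ^ e i) {B b a : ℕ} (hB : B = d * b + 1)
    (hfB : expand K B f = f ^ B) (hab : a + f.natDegree ≤ b) (H : Fin d → K[X][X])
    (hH : ∀ i, (H i).natDegree ≤ a)
    (h : ∑ i, (H i).eval₂ (expand K B : K[X] →+* K[X]) X * (f ^ b) ^ (i : ℕ) = 0) : H = 0 := by
  have : NeZero d := ⟨hd.ne'⟩
  obtain ⟨u, hu0, hu, hli⟩ := linearIndependent_root_of_prod s α hα e hd hζ he hf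
  have hfm : f.Monic := hf ▸ monic_prod_of_monic _ _ fun i _ => (monic_X_sub_C _).pow _
  refine eq_zero_of_det_twistedCirculant (algebraMap K[X][X] _) (f.map C) (C f) H u hu hu0 hli ?_
  refine eq_zero_of_eval₂_expand_eq_zero (B := B) _ ?_ ?_
  · refine (natDegree_det_le (n := b) _ fun j k => ?_).trans_lt (by omega)
    rw [twistedCirculant]
    refine natDegree_mul_le.trans ?_
    have h1 : (if j ≤ k then f.map C else C f : K[X][X]).natDegree ≤ f.natDegree := by
      split_ifs
      · exact natDegree_map_le
      · simp
    have := hH (k - j)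
    omega
  · refine det_twistedCirculant_eq_zero (eval₂RingHom (expand K B : K[X] →+* K[X]) X) (f.map C)
      (C f) H (f ^ b) ?_ h
    simp only [coe_eval₂RingHom, eval₂_C, eval₂_map]
    have h1 : f.eval₂ ((expand K B : K[X] →+* K[X]).comp C) X = f := by
      have : ((expand K B : K[X] →+* K[X]).comp C) = C := by ext; simp
      rw [this, eval₂_C_X]
    rw [h1, RingHom.coe_coe, hfB, ← pow_mul, ← pow_succ', hB, mul_comm]

open Polynomial in
theorem exists_relation_of_natDegree_lt {K ι : Type*} [Field K] [Fintype ι] (v : ι → K[X]) {T : ℕ}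
    (hv : ∀ i, (v i).natDegree < T) (hT : T < Fintype.card ι) :
    ∃ x : ι → K, ∑ i, C (x i) * v i = 0 ∧ ∃ i, x i ≠ 0 := by
  let v' : ι → degreeLT K T := fun i => ⟨v i, mem_degreeLT.2
    (degree_le_natDegree.trans_lt (by exact_mod_cast hv i))⟩
  have hfr : Module.finrank K (degreeLT K T) = T := by
    rw [(degreeLTEquiv K T).finrank_eq, Module.finrank_fin_fun]
  have : FiniteDimensional K (degreeLT K T) :=
    Module.Finite.equiv (degreeLTEquiv K T).symm
  have hn : ¬ LinearIndependent K v' := fun h => by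
    have := h.fintype_card_le_finrank
    omega
  obtain ⟨x, hx, hi⟩ := Fintype.not_linearIndependent_iff.1 hn
  refine ⟨x, ?_, hi⟩
  have := congrArg (Subtype.val) hx
  simpa [v', smul_eq_C_mul] using this

open Polynomial in
theorem expand_card_pow {K : Type*} [Field K] [Fintype K] (m : ℕ) (f : K[X]) :
    expand K (Fintype.card K ^ m) f = f ^ Fintype.card K ^ m := by
  induction m with
  | zero => simp
  | succ m ih =>
    rw [pow_succ', expand_mul, ih, map_pow, FiniteField.expand_card, ← pow_mul]

open Polynomial in
theorem card_filter_aeval_pow_eq_le {K E ι : Type*} [Field K] [Fintype K] [Field E] [Fintype E]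
    [DecidableEq E] [Algebra K E] (s : Finset ι) (α : ι → K)
    (hα : Set.InjOn α s) (e : ι → ℕ) {d : ℕ} (hd : 2 ≤ d) {ζ : K} (hζ : IsPrimitiveRoot ζ d)
    (he : ∀ r, r ∣ d → (∀ i ∈ s, r ∣ e i) → r = 1) {f : K[X]}
    (hf : f = ∏ i ∈ s, (X - C (α i)) ^ e i) {B b m : ℕ} (hB : B = d * b + 1)
    (hBm : B = Fintype.card K ^ m) (hE : Fintype.card E = B ^ 2) (hb : 2 * f.natDegree < b)
    {c : K} (hc : c ≠ 0) :
    #{γ : E | (aeval γ f) ^ (b * (B + 1)) = algebraMap K E c} ≤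
      b * B + (3 * f.natDegree + 1) * B := by
  set D := f.natDegree with hD
  obtain ⟨a, rfl⟩ : ∃ a, b = a + D := ⟨b - D, by omega⟩
  set b := a + D with hbdef
  set l := b + 2 * D + 1 with hl
  set w := f ^ b with hw
  have hwdeg : ∀ j, (w ^ j).natDegree ≤ j * (b * D) := fun j =>
    natDegree_pow_le.trans (Nat.mul_le_mul_left _ natDegree_pow_le)
  set T := a * B + l + d * (b * D) with hT
  let v : Fin d × Fin (a + 1) × Fin l → K[X] := fun i =>
    C (c ^ (i.1 : ℕ)) * X ^ ((i.2.2 : ℕ) + i.2.1 * B) * w ^ (d - 1 - i.1)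
  have hv : ∀ i, (v i).natDegree < T := by
    rintro ⟨i, r, t⟩
    have h1 : ((C (c ^ (i : ℕ)) * X ^ ((t : ℕ) + r * B) : K[X])).natDegree ≤ (t : ℕ) + r * B :=
      natDegree_C_mul_X_pow_le _ _
    have h2 := hwdeg (d - 1 - i)
    have h3 : (d - 1 - i) * (b * D) ≤ d * (b * D) := Nat.mul_le_mul_right _ (by omega)
    have h4 : (r : ℕ) * B ≤ a * B := Nat.mul_le_mul_right _ (by omega)
    have h5 := natDegree_mul_le (p := (C (c ^ (i : ℕ)) * X ^ ((t : ℕ) + r * B) : K[X]))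
      (q := w ^ (d - 1 - i))
    have := t.2
    simp only [v]
    omega
  have hcard : T < Fintype.card (Fin d × Fin (a + 1) × Fin l) := by
    simp only [Fintype.card_prod, Fintype.card_fin]
    have haD : D < a := by omega
    rw [hT, hl, hB, hbdef]
    have h1 : D * (d * a) + d * (D * D) + d * D ≤ 2 * (d * a * D) := by
      have : d * (D * (D + 1)) ≤ d * (D * a) :=
        Nat.mul_le_mul_left _ (Nat.mul_le_mul_left _ haD)
      nlinarith
    nlinarith [Nat.mul_le_mul_right a hd, Nat.mul_le_mul_right D hd]
  obtain ⟨x, hx, hx0⟩ := exists_relation_of_natDegree_lt v hv hcard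
  let H : Fin d → K[X][X] := fun i => ∑ r : Fin (a + 1), ∑ t : Fin l,
    monomial (r : ℕ) (monomial (t : ℕ) (x (i, r, t)))
  have hH0 : H ≠ 0 := by
    intro h
    obtain ⟨⟨i, r, t⟩, hi⟩ := hx0
    apply hi
    have h1 := congrArg (fun p : K[X][X] => (p.coeff r).coeff t) (congrFun h i)
    simp only [H, finsetSum_coeff, coeff_monomial, Pi.zero_apply, coeff_zero] at h1
    rw [Finset.sum_eq_single_of_mem r (mem_univ _)] at h1
    · simp only [if_true] at h1
      simp only [coeff_monomial] at h1
      rw [Finset.sum_eq_single_of_mem t (mem_univ _)] at h1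
      · simpa using h1
      · intro t' _ hne
        rw [if_neg (fun h => hne (Fin.ext h))]
    · intro r' _ hne
      refine Finset.sum_eq_zero fun t' _ => ?_
      rw [if_neg (fun h => hne (Fin.ext h)), coeff_zero]
  have hHdeg : ∀ i, (H i).natDegree ≤ a := fun i =>
    natDegree_sum_le_of_forall_le _ _ fun r _ => natDegree_sum_le_of_forall_le _ _ fun t _ =>
      (natDegree_monomial_le _).trans (by omega)
  have hfB : expand K B f = f ^ B := by rw [hBm, expand_card_pow]
  set G : K[X] := ∑ i, (H i).eval₂ (expand K B : K[X] →+* K[X]) X * w ^ (i : ℕ) with hG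
  have hG0 : G ≠ 0 := fun h => hH0
    (eq_zero_of_sum_eval₂_expand_eq_zero s α hα e (by omega) hζ he hf hB hfB le_rfl H hHdeg h)
  have hGx : G = ∑ i : Fin d, ∑ r : Fin (a + 1), ∑ t : Fin l,
      C (x (i, r, t)) * X ^ ((t : ℕ) * B + r) * w ^ (i : ℕ) := by
    rw [hG]
    refine Finset.sum_congr rfl fun i _ => ?_
    simp only [H, eval₂_finsetSum, Finset.sum_mul]
    refine Finset.sum_congr rfl fun r _ => Finset.sum_congr rfl fun t _ => ?_
    rw [eval₂_monomial, RingHom.coe_coe, expand_monomial, ← C_mul_X_pow_eq_monomial, pow_add]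
    ring
  have hGdeg : G.natDegree ≤ b * B + (3 * D + 1) * B := by
    rw [hGx]
    refine natDegree_sum_le_of_forall_le _ _ fun i _ => natDegree_sum_le_of_forall_le _ _ fun r _ =>
      natDegree_sum_le_of_forall_le _ _ fun t _ => ?_
    refine natDegree_mul_le.trans ?_
    have h1 : ((C (x (i, r, t)) * X ^ ((t : ℕ) * B + r) : K[X])).natDegree ≤ (t : ℕ) * B + r :=
      natDegree_C_mul_X_pow_le _ _
    have h2 := hwdeg i
    have h3 : (i : ℕ) * (b * D) ≤ d * (b * D) := Nat.mul_le_mul_right _ i.2.le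
    have h4 : (t : ℕ) * B ≤ (b + 2 * D) * B := Nat.mul_le_mul_right _ (by omega)
    have h5 : (r : ℕ) ≤ a := by omega
    have h6 : d * (b * D) ≤ D * B := by rw [hB]; nlinarith
    have h7 : b ≤ B := by rw [hB]; nlinarith
    nlinarith
  let φ : E →ₐ[K] E := FiniteField.frobeniusAlgHom K E ^ m
  have hφ : ∀ y, φ y = y ^ B := by
    intro y
    simp only [φ, AlgHom.coe_pow, FiniteField.coe_frobeniusAlgHom, pow_iterate, hBm]
  have hroot : ∀ γ : E, (aeval γ f) ^ (b * (B + 1)) = algebraMap K E c → aeval γ G = 0 := by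
    intro γ hγ
    set W := aeval γ w with hW
    have hWc : W ^ B * W = algebraMap K E c := by
      rw [hW, hw, map_pow, ← pow_succ, ← pow_mul, hγ]
    have hW0 : W ≠ 0 := by
      intro h
      rw [h, mul_zero] at hWc
      exact hc ((map_eq_zero _).1 hWc.symm)
    have hγB : (γ ^ B) ^ B = γ := by rw [← pow_mul, ← sq, ← hE, FiniteField.pow_card]
    have h1 : φ (aeval γ G) * W ^ (d - 1) = aeval γ (∑ i, C (x i) * v i) := by
      rw [hGx]
      simp only [map_sum, Fintype.sum_prod_type, Finset.sum_mul]
      refine Finset.sum_congr rfl fun i _ => Finset.sum_congr rfl fun r _ =>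
        Finset.sum_congr rfl fun t _ => ?_
      simp only [v, map_mul, map_pow, aeval_C, aeval_X, AlgHom.commutes, ← hW]
      have h2 : W ^ (d - 1) = W ^ (i : ℕ) * W ^ (d - 1 - i) := by
        rw [← pow_add]; congr 1; omega
      rw [hφ, hφ, h2, ← hWc, mul_pow, pow_add, pow_add, pow_mul' (γ ^ B) _ B, hγB,
        pow_mul' γ _ B]
      ring
    rw [hx, map_zero] at h1
    have h2 := (mul_eq_zero.1 h1).resolve_right (pow_ne_zero _ hW0)
    exact (map_eq_zero φ).1 h2
  have hsub : ({γ : E | (aeval γ f) ^ (b * (B + 1)) = algebraMap K E c} : Finset E) ⊆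
      (G.aroots E).toFinset := by
    intro γ hγ
    rw [Multiset.mem_toFinset, mem_aroots]
    exact ⟨hG0, hroot γ (by simpa using hγ)⟩
  calc _ ≤ _ := Finset.card_le_card hsub
    _ ≤ _ := Multiset.toFinset_card_le _
    _ ≤ (G.map (algebraMap K E)).natDegree := card_roots' _
    _ ≤ _ := natDegree_map_le
    _ ≤ _ := hGdeg

theorem MulChar.exists_generator_sum {K : Type*} [Field K] [Fintype K] [DecidableEq K]
    {d s : ℕ} (hd : 2 ≤ d) (hds : d * s = Fintype.card K - 1) (χ : MulChar K ℂ)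
    (hχ : orderOf χ = d) :
    ∃ g : K, g ≠ 0 ∧ ‖χ g‖ = 1 ∧ ∑ j ∈ range d, χ g ^ j = 0 ∧
      ∀ z : K, z ≠ 0 → ∃ i ∈ range d, χ z = χ g ^ i ∧
        ∀ j ∈ range d, z ^ s = (g ^ j) ^ s ↔ j = i := by
  obtain ⟨g, hg⟩ := IsCyclic.exists_generator (α := Kˣ)
  have hord : orderOf g = d * s := by
    rw [orderOf_eq_card_of_forall_mem_zpowers hg, Nat.card_eq_fintype_card, Fintype.card_units, hds]
  have hs : 0 < s := by
    rcases Nat.eq_zero_or_pos s with h | h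
    · have := _root_.orderOf_pos g
      rw [hord, h] at this; simp at this
    · exact h
  have hpow : ∀ u : Kˣ, ∃ k : ℕ, u = g ^ k := fun u => by
    obtain ⟨k, hk⟩ := mem_powers_iff_mem_zpowers.2 (hg u)
    exact ⟨k, hk.symm⟩
  have hχd : χ g ^ d = 1 := by
    rw [← MulChar.pow_apply_coe, ← hχ, pow_orderOf_eq_one, MulChar.one_apply_coe]
  have hχ1 : χ g ≠ 1 := by
    intro h
    have : χ = 1 := by
      ext u
      obtain ⟨n, rfl⟩ := hpow u
      rw [Units.val_pow_eq_pow_val, map_pow, h, one_pow, ← Units.val_pow_eq_pow_val,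
        MulChar.one_apply_coe]
    rw [this, orderOf_one] at hχ
    omega
  refine ⟨g, g.ne_zero, Complex.norm_eq_one_of_pow_eq_one hχd (by omega), ?_, ?_⟩
  · have := mul_neg_geom_sum (χ g) d
    rw [hχd, sub_self] at this
    exact (mul_eq_zero.1 this).resolve_left (sub_ne_zero.2 (Ne.symm hχ1))
  · intro z hz
    obtain ⟨k, hk⟩ : ∃ k : ℕ, z = (g : K) ^ k := by
      obtain ⟨k, hk⟩ := hpow (Units.mk0 z hz)
      exact ⟨k, by simpa using congrArg Units.val hk⟩
    refine ⟨k % d, by simpa using Nat.mod_lt _ (by omega), ?_, ?_⟩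
    · rw [hk, map_pow]
      exact pow_eq_pow_mod k hχd
    · intro j hj
      rw [hk, ← pow_mul, ← pow_mul, ← Units.val_pow_eq_pow_val, ← Units.val_pow_eq_pow_val,
        Units.val_inj, pow_eq_pow_iff_modEq, hord]
      rw [mul_comm d s, mul_comm k, mul_comm j]
      rw [Nat.ModEq.mul_left_cancel_iff' hs.ne']
      have := Nat.mod_eq_of_lt (Finset.mem_range.1 hj)
      unfold Nat.ModEq
      rw [this]; exact eq_comm

open Polynomial in
theorem norm_sum_norm_aeval_le {K E ι : Type*} [Field K] [Fintype K] [Field E]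
    [Fintype E] [Algebra K E] (s : Finset ι) (α : ι → K)
    (hα : Set.InjOn α s) (e : ι → ℕ) {d : ℕ} (hd : 2 ≤ d) (hdq : d ∣ Fintype.card K - 1)
    (χ : MulChar K ℂ) (hχ : orderOf χ = d)
    (he : ∀ r, r ∣ d → (∀ i ∈ s, r ∣ e i) → r = 1) {f : K[X]}
    (hf : f = ∏ i ∈ s, (X - C (α i)) ^ e i) {B m : ℕ}
    (hBm : B = Fintype.card K ^ m) (hE : Fintype.card E = B ^ 2)
    (hB : 2 * f.natDegree * d + 1 < B) :
    ‖∑ γ : E, χ (Algebra.norm K (aeval γ f))‖ ≤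
      ((d * (3 * f.natDegree + 1) + f.natDegree : ℕ) : ℝ) * B := by
  classical
  have hfm : f.Monic := hf ▸ monic_prod_of_monic _ _ fun i _ => (monic_X_sub_C _).pow _
  set D := f.natDegree with hD
  obtain ⟨t, ht⟩ := hdq
  obtain ⟨g, hg0, hgn, hgs, hgz⟩ := χ.exists_generator_sum hd ht.symm hχ
  have hdB : d ∣ B - 1 := by
    rw [hBm]
    exact (Dvd.intro _ ht.symm).trans (Nat.sub_one_dvd_pow_sub_one _ _)
  obtain ⟨b, hb⟩ := hdB
  have hBb : B = d * b + 1 := by omega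
  have hbD : 2 * D < b := by
    have : d * (2 * D) < d * b := by nlinarith
    exact lt_of_mul_lt_mul_left this (Nat.zero_le _)
  have hq1 : 1 < Fintype.card K := Fintype.one_lt_card
  have hexp : (Nat.card E - 1) / (Nat.card K - 1) * t = b * (B + 1) := by
    rw [Nat.card_eq_fintype_card, Nat.card_eq_fintype_card, hE]
    have h1 : Fintype.card K - 1 ∣ B ^ 2 - 1 := by
      rw [hBm, ← pow_mul]; exact Nat.sub_one_dvd_pow_sub_one _ _
    obtain ⟨c, hc⟩ := h1
    rw [hc, Nat.mul_div_cancel_left _ (by omega)]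
    have h2 : B ^ 2 - 1 = d * b * (B + 1) := by
      have : B ^ 2 = d * b * (B + 1) + 1 := by rw [hBb]; ring
      omega
    have h3 : d * (c * t) = d * (b * (B + 1)) := by
      rw [← mul_assoc d b, ← h2, hc, ht]; ring
    exact Nat.eq_of_mul_eq_mul_left (by omega) h3
  have hnorm : ∀ γ : E, algebraMap K E (Algebra.norm K (aeval γ f) ^ t) =
      (aeval γ f) ^ (b * (B + 1)) := by
    intro γ
    rw [map_pow, FiniteField.algebraMap_norm_eq_pow, ← pow_mul, hexp]
  set T : ℝ := b * B + (3 * D + 1) * B with hT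
  let N : ℕ → ℕ := fun j => #{γ : E | Algebra.norm K (aeval γ f) ^ t = (g ^ j) ^ t}
  have hprim : ∃ ζ : K, IsPrimitiveRoot ζ d := by
    obtain ⟨u, hu⟩ := IsCyclic.exists_generator (α := Kˣ)
    have h1 : IsPrimitiveRoot u (Fintype.card K - 1) := by
      have := IsPrimitiveRoot.orderOf u
      rwa [orderOf_eq_card_of_forall_mem_zpowers hu, Nat.card_eq_fintype_card,
        Fintype.card_units] at this
    exact ⟨_, (IsPrimitiveRoot.coe_units_iff.2 (h1.pow (by omega)
      (ht.trans (mul_comm _ _))))⟩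
  obtain ⟨ζ, hζ⟩ := hprim
  have hN : ∀ j, (N j : ℝ) ≤ T := by
    intro j
    have h1 := card_filter_aeval_pow_eq_le (E := E) s α hα e hd hζ he hf hBb hBm hE hbD
      (c := (g ^ j) ^ t) (pow_ne_zero _ (pow_ne_zero _ hg0))
    have h2 : N j ≤ b * B + (3 * D + 1) * B := by
      refine le_trans (le_of_eq ?_) h1
      simp only [N]
      congr 1
      ext γ
      rw [Finset.mem_filter, Finset.mem_filter, ← hnorm, (algebraMap K E).injective.eq_iff]
    rw [hT]
    exact_mod_cast h2
  have hval : ∀ γ : E, χ (Algebra.norm K (aeval γ f)) = ∑ j ∈ range d,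
      if Algebra.norm K (aeval γ f) ^ t = (g ^ j) ^ t then χ g ^ j else 0 := by
    intro γ
    rcases eq_or_ne (Algebra.norm K (aeval γ f)) 0 with h0 | h0
    · have ht0 : t ≠ 0 := by rintro rfl; omega
      rw [h0, MulChar.map_zero, Finset.sum_eq_zero]
      intro j _
      rw [if_neg]
      rw [zero_pow ht0]
      exact (pow_ne_zero _ (pow_ne_zero _ hg0)).symm
    · obtain ⟨i, hi, h1, h2⟩ := hgz _ h0
      rw [h1, Finset.sum_eq_single_of_mem i hi]
      · rw [if_pos ((h2 i hi).2 rfl)]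
      · intro j hj hne
        rw [if_neg (fun h => hne ((h2 j hj).1 h))]
  have hS : ∑ γ : E, χ (Algebra.norm K (aeval γ f)) =
      ∑ j ∈ range d, χ g ^ j * ((N j : ℂ) - T) := by
    simp_rw [hval, mul_sub, Finset.sum_sub_distrib, ← Finset.sum_mul, hgs, zero_mul, sub_zero]
    rw [Finset.sum_comm]
    refine Finset.sum_congr rfl fun j _ => ?_
    rw [← Finset.sum_filter, Finset.sum_const, nsmul_eq_mul, mul_comm]
  have hcount : Fintype.card E ≤ (∑ j ∈ range d, N j) + D := by
    have h1 : (univ : Finset E) ⊆ ((range d).biUnion fun j =>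
        ({γ : E | Algebra.norm K (aeval γ f) ^ t = (g ^ j) ^ t} : Finset E)) ∪
        (f.aroots E).toFinset := by
      intro γ _
      rw [Finset.mem_union, Finset.mem_biUnion, Multiset.mem_toFinset, mem_aroots]
      rcases eq_or_ne (aeval γ f) 0 with h0 | h0
      · exact Or.inr ⟨hfm.ne_zero, h0⟩
      · left
        obtain ⟨i, hi, h1, h2⟩ := hgz _ ((Algebra.norm_ne_zero_iff (R := K)).2 h0)
        exact ⟨i, hi, by simpa using (h2 i hi).2 rfl⟩
    calc Fintype.card E = #(univ : Finset E) := rfl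
      _ ≤ _ := Finset.card_le_card h1
      _ ≤ _ := Finset.card_union_le _ _
      _ ≤ _ := by
        refine Nat.add_le_add Finset.card_biUnion_le ?_
        refine (Multiset.toFinset_card_le _).trans ((card_roots' _).trans natDegree_map_le)
  calc _ = ‖∑ j ∈ range d, χ g ^ j * ((N j : ℂ) - T)‖ := by rw [hS]
    _ ≤ ∑ j ∈ range d, ‖χ g ^ j * ((N j : ℂ) - T)‖ := norm_sum_le _ _
    _ = ∑ j ∈ range d, (T - N j) := by
      refine Finset.sum_congr rfl fun j _ => ?_
      rw [norm_mul, norm_pow, hgn, one_pow, one_mul, ← Complex.ofReal_natCast,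
        ← Complex.ofReal_sub, Complex.norm_real, Real.norm_eq_abs, abs_sub_comm,
        abs_of_nonneg (sub_nonneg.2 (hN j))]
    _ = d * T - ∑ j ∈ range d, (N j : ℝ) := by simp
    _ ≤ _ := by
      have h1 : ((B : ℝ)) ^ 2 ≤ (∑ j ∈ range d, (N j : ℝ)) + D := by
        rw [hE] at hcount; exact_mod_cast hcount
      have h2 : (B : ℝ) = d * b + 1 := by exact_mod_cast hBb
      have h3 : (1 : ℝ) ≤ B := by
        have : 1 ≤ B := by omega
        exact_mod_cast this
      have h4 : (D : ℝ) ≤ D * B := le_mul_of_one_le_right (Nat.cast_nonneg _) h3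
      have h5 : (d : ℝ) * (b * B) = (B - 1) * B := by
        have : (d : ℝ) * b = B - 1 := by rw [h2]; ring
        rw [← mul_assoc, this]
      push_cast
      rw [hT, mul_add, h5]
      nlinarith

section

open Polynomial UniqueFactorizationMonoid

theorem Polynomial.finite_setOf_natDegree_le (K : Type*) [Field K] [Finite K] (n : ℕ) :
    {g : K[X] | g.natDegree ≤ n}.Finite := by
  refine Set.Finite.of_injOn (f := fun g : K[X] => fun i : Fin (n + 1) => g.coeff i)
    (t := Set.univ) (fun _ _ => Set.mem_univ _) ?_ Set.finite_univ
  intro g hg h hh e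
  ext i
  rcases Nat.lt_or_ge n i with hi | hi
  · rw [coeff_eq_zero_of_natDegree_lt (lt_of_le_of_lt hg hi),
      coeff_eq_zero_of_natDegree_lt (lt_of_le_of_lt hh hi)]
  · exact congrFun e ⟨i, by omega⟩

/-- The monic polynomials of degree `n` over a finite field. -/
noncomputable def monicsOfDegree (K : Type*) [Field K] [Finite K] (n : ℕ) : Finset K[X] :=
  Set.Finite.toFinset (s := {g : K[X] | g.Monic ∧ g.natDegree = n})
    ((Polynomial.finite_setOf_natDegree_le K n).subset fun _ hg => hg.2.le)

/-- The monic irreducible polynomials of degree at most `n` over a finite field. -/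
noncomputable def monicIrreduciblesUpTo (K : Type*) [Field K] [Finite K] (n : ℕ) : Finset K[X] :=
  Set.Finite.toFinset (s := {g : K[X] | (g.Monic ∧ Irreducible g) ∧ g.natDegree ≤ n})
    ((Polynomial.finite_setOf_natDegree_le K n).subset fun _ hg => hg.2)

section

variable {K : Type*} [Field K] [Finite K]

theorem mem_monicsOfDegree {n : ℕ} {g : K[X]} :
    g ∈ monicsOfDegree K n ↔ g.Monic ∧ g.natDegree = n :=
  Set.Finite.mem_toFinset _

theorem mem_monicIrreduciblesUpTo {n : ℕ} {g : K[X]} :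
    g ∈ monicIrreduciblesUpTo K n ↔ (g.Monic ∧ Irreducible g) ∧ g.natDegree ≤ n :=
  Set.Finite.mem_toFinset _

theorem sum_monicIrreduciblesUpTo_natDegree_mul_count [DecidableEq K] {n : ℕ} {g : K[X]}
    (hg : g ∈ monicsOfDegree K n) :
    ∑ P ∈ monicIrreduciblesUpTo K n, P.natDegree * (normalizedFactors g).count P = n := by
  obtain ⟨hm, hn⟩ := mem_monicsOfDegree.1 hg
  have hg0 : g ≠ 0 := hm.ne_zero
  have hP : ∀ P ∈ normalizedFactors g, P.Monic ∧ Irreducible P := fun P hP => by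
    refine ⟨?_, irreducible_of_normalized_factor P hP⟩
    have h0 := (irreducible_of_normalized_factor P hP).ne_zero
    rw [← normalize_normalized_factor P hP]
    exact monic_normalize h0
  have hprod : (normalizedFactors g).prod = g := by
    rw [prod_normalizedFactors_eq hg0, hm.normalize_eq_self]
  have h1 : n = ((normalizedFactors g).map natDegree).sum := by
    have := natDegree_multiset_prod_of_monic ((normalizedFactors g)) (fun P h => (hP P h).1)
    rw [hprod, hn] at this
    exact this
  conv_rhs => rw [h1, Finset.sum_multiset_map_count]
  symm
  simp only [smul_eq_mul, mul_comm]
  refine Finset.sum_subset ?_ ?_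
  · intro P h
    rw [Multiset.mem_toFinset] at h
    refine mem_monicIrreduciblesUpTo.2 ⟨hP P h, ?_⟩
    rw [← hn]
    exact natDegree_le_of_dvd (dvd_of_mem_normalizedFactors h) hg0
  · intro P _ h
    rw [Multiset.mem_toFinset] at h
    rw [Multiset.count_eq_zero_of_notMem h, mul_zero]

open scoped Classical in
theorem card_filter_pow_dvd {n : ℕ} {g P : K[X]}
    (hg : g ∈ monicsOfDegree K n) (hP : P ∈ monicIrreduciblesUpTo K n) :
    #{j ∈ range (n + 1) | j ≠ 0 ∧ P.natDegree ∣ j ∧ P ^ (j / P.natDegree) ∣ g} =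
      (normalizedFactors g).count P := by
  obtain ⟨hm, hn⟩ := mem_monicsOfDegree.1 hg
  obtain ⟨⟨hPm, hPi⟩, hPn⟩ := mem_monicIrreduciblesUpTo.1 hP
  have hd := hPi.natDegree_pos
  have key : ∀ r, P ^ r ∣ g ↔ r ≤ (normalizedFactors g).count P := fun r => by
    rw [pow_dvd_iff_le_emultiplicity, emultiplicity_eq_count_normalizedFactors hPi hm.ne_zero,
      hPm.normalize_eq_self, Nat.cast_le]
  rw [← Nat.add_sub_cancel ((normalizedFactors g).count P) 1, ← Nat.card_Icc]
  symm
  refine Finset.card_bij (fun r _ => r * P.natDegree) ?_ ?_ ?_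
  · intro r hr
    rw [Finset.mem_Icc] at hr
    have hdvd := (key r).2 hr.2
    have := natDegree_le_of_dvd hdvd hm.ne_zero
    rw [natDegree_pow, hn] at this
    simp only [Finset.mem_filter, Finset.mem_range]
    refine ⟨by omega, (Nat.mul_pos hr.1 hd).ne', dvd_mul_left _ _, ?_⟩
    rwa [Nat.mul_div_cancel _ hd]
  · intro a _ b _ h
    exact Nat.eq_of_mul_eq_mul_right hd h
  · intro j hj
    simp only [Finset.mem_filter, Finset.mem_range] at hj
    obtain ⟨_, hj0, ⟨r, rfl⟩, hr⟩ := hj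
    rw [Nat.mul_div_cancel_left _ hd] at hr
    refine ⟨r, Finset.mem_Icc.2 ⟨?_, (key r).1 hr⟩, mul_comm _ _⟩
    exact Nat.pos_of_ne_zero (fun h => hj0 (by rw [h, mul_zero]))

/-- The coefficients of the `L`-function of a completely multiplicative function. -/
noncomputable def monicSum (Λ : K[X] →* ℂ) (n : ℕ) : ℂ := ∑ g ∈ monicsOfDegree K n, Λ g

open scoped Classical in
/-- The coefficients of the logarithmic derivative of the `L`-function of a completely
multiplicative function. -/
noncomputable def primePowerSum (Λ : K[X] →* ℂ) (n : ℕ) : ℂ :=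
  ∑ P ∈ monicIrreduciblesUpTo K n with P.natDegree ∣ n, P.natDegree * Λ P ^ (n / P.natDegree)

theorem monicSum_zero (Λ : K[X] →* ℂ) : monicSum Λ 0 = 1 := by
  have : monicsOfDegree K 0 = {1} := by
    ext g
    simp only [mem_monicsOfDegree, mem_singleton]
    exact ⟨fun h => h.1.natDegree_eq_zero.1 h.2, by rintro rfl; simp⟩
  simp [monicSum, this]

theorem primePowerSum_zero (Λ : K[X] →* ℂ) : primePowerSum Λ 0 = 0 := by
  refine Finset.sum_eq_zero fun P hP => ?_
  have := mem_monicIrreduciblesUpTo.1 (Finset.mem_filter.1 hP).1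
  have := this.1.2.natDegree_pos
  omega

open scoped Classical in
theorem primePowerSum_eq (Λ : K[X] →* ℂ) {j n : ℕ} (hj : j ≤ n) :
    primePowerSum Λ j = ∑ P ∈ monicIrreduciblesUpTo K n,
      if j ≠ 0 ∧ P.natDegree ∣ j then P.natDegree * Λ P ^ (j / P.natDegree) else 0 := by
  rcases eq_or_ne j 0 with rfl | h0
  · simp [primePowerSum_zero]
  · rw [primePowerSum, ← Finset.sum_filter]
    refine Finset.sum_congr ?_ fun _ _ => rfl
    ext P
    simp only [Finset.mem_filter, mem_monicIrreduciblesUpTo]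
    constructor
    · rintro ⟨⟨h, h'⟩, h''⟩
      exact ⟨⟨h, h'.trans hj⟩, h0, h''⟩
    · rintro ⟨⟨h, h'⟩, -, h''⟩
      exact ⟨⟨h, Nat.le_of_dvd (Nat.pos_of_ne_zero h0) h''⟩, h''⟩

open scoped Classical in
theorem map_mul_monicSum (Λ : K[X] →* ℂ) {Q : K[X]} (hQ : Q.Monic) {n : ℕ}
    (hn : Q.natDegree ≤ n) :
    Λ Q * monicSum Λ (n - Q.natDegree) = ∑ g ∈ monicsOfDegree K n, if Q ∣ g then Λ g else 0 := by
  rw [monicSum, Finset.mul_sum, ← Finset.sum_filter]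
  refine Finset.sum_bij (fun h _ => Q * h) ?_ ?_ ?_ ?_
  · intro h hh
    obtain ⟨h1, h2⟩ := mem_monicsOfDegree.1 hh
    rw [Finset.mem_filter, mem_monicsOfDegree, hQ.natDegree_mul h1]
    exact ⟨⟨hQ.mul h1, by omega⟩, dvd_mul_right _ _⟩
  · intro a _ b _ h
    exact mul_left_cancel₀ hQ.ne_zero h
  · intro g hg
    rw [Finset.mem_filter, mem_monicsOfDegree] at hg
    obtain ⟨⟨h1, h2⟩, h, rfl⟩ := hg
    have h3 : h.Monic := hQ.of_mul_monic_left h1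
    rw [hQ.natDegree_mul h3] at h2
    exact ⟨h, mem_monicsOfDegree.2 ⟨h3, by omega⟩, rfl⟩
  · intro h _
    rw [map_mul]

theorem mul_monicSum_eq (Λ : K[X] →* ℂ) (n : ℕ) :
    n * monicSum Λ n = ∑ p ∈ antidiagonal n, primePowerSum Λ p.1 * monicSum Λ p.2 := by
  classical
  rw [Finset.Nat.sum_antidiagonal_eq_sum_range_succ (fun a b => primePowerSum Λ a * monicSum Λ b)]
  have h1 : ∀ j ∈ range n.succ, primePowerSum Λ j * monicSum Λ (n - j) =
      ∑ P ∈ monicIrreduciblesUpTo K n, ∑ g ∈ monicsOfDegree K n,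
        if j ≠ 0 ∧ P.natDegree ∣ j ∧ P ^ (j / P.natDegree) ∣ g then P.natDegree * Λ g else 0 := by
    intro j hj
    rw [Finset.mem_range, Nat.lt_succ_iff] at hj
    rw [primePowerSum_eq Λ hj, Finset.sum_mul]
    refine Finset.sum_congr rfl fun P hP => ?_
    obtain ⟨⟨hPm, hPi⟩, -⟩ := mem_monicIrreduciblesUpTo.1 hP
    by_cases hc : j ≠ 0 ∧ P.natDegree ∣ j
    · have hdeg : (P ^ (j / P.natDegree)).natDegree = j := by
        rw [natDegree_pow, Nat.div_mul_cancel hc.2]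
      have := map_mul_monicSum Λ (hPm.pow (j / P.natDegree)) (n := n) (by rw [hdeg]; exact hj)
      rw [hdeg, map_pow] at this
      rw [if_pos hc, mul_assoc, this, Finset.mul_sum]
      refine Finset.sum_congr rfl fun g _ => ?_
      by_cases hd : P ^ (j / P.natDegree) ∣ g
      · rw [if_pos hd, if_pos ⟨hc.1, hc.2, hd⟩]
      · rw [if_neg hd, if_neg (fun h => hd h.2.2), mul_zero]
    · rw [if_neg hc, zero_mul]
      symm
      exact Finset.sum_eq_zero fun g _ => if_neg fun h => hc ⟨h.1, h.2.1⟩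
  rw [Finset.sum_congr rfl h1, Finset.sum_comm]
  simp_rw [Finset.sum_comm (s := range n.succ)]
  rw [Finset.sum_comm, monicSum, Finset.mul_sum]
  refine Finset.sum_congr rfl fun g hg => ?_
  have h2 : ∀ P ∈ monicIrreduciblesUpTo K n, (∑ j ∈ range n.succ,
      if j ≠ 0 ∧ P.natDegree ∣ j ∧ P ^ (j / P.natDegree) ∣ g then P.natDegree * Λ g else 0) =
      ((P.natDegree * (normalizedFactors g).count P : ℕ) : ℂ) * Λ g := by
    intro P hP
    rw [← Finset.sum_filter, Finset.sum_const, ← card_filter_pow_dvd hg hP, nsmul_eq_mul]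
    push_cast
    ring
  rw [Finset.sum_congr rfl h2, ← Finset.sum_mul, ← Nat.cast_sum,
    sum_monicIrreduciblesUpTo_natDegree_mul_count hg]

end

end

section

open Polynomial

open scoped Classical in
theorem sum_apply_minpoly {K E : Type*} [Field K] [Finite K] [Field E] [Fintype E] [Algebra K E]
    (Φ : K[X] → ℂ) :
    ∑ γ : E, Φ (minpoly K γ) = ∑ P ∈ monicIrreduciblesUpTo K (Module.finrank K E)
      with P.natDegree ∣ Module.finrank K E, P.natDegree * Φ P := by
  set n := Module.finrank K E with hn
  have hint : ∀ γ : E, IsIntegral K γ := fun γ => Algebra.IsIntegral.isIntegral γ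
  have hmaps : ∀ γ ∈ (univ : Finset E), minpoly K γ ∈
      {P ∈ monicIrreduciblesUpTo K n | P.natDegree ∣ n} := by
    intro γ _
    rw [Finset.mem_filter, mem_monicIrreduciblesUpTo]
    exact ⟨⟨⟨minpoly.monic (hint γ), minpoly.irreducible (hint γ)⟩, minpoly.natDegree_le γ⟩,
      minpoly.degree_dvd (hint γ)⟩
  rw [← Finset.sum_fiberwise_of_maps_to hmaps]
  refine Finset.sum_congr rfl fun P hP => ?_
  rw [Finset.mem_filter, mem_monicIrreduciblesUpTo] at hP
  obtain ⟨⟨⟨hPm, hPi⟩, -⟩, hPn⟩ := hP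
  have h1 : ∑ γ : E with minpoly K γ = P, Φ (minpoly K γ) = ∑ γ : E with minpoly K γ = P, Φ P :=
    Finset.sum_congr rfl fun γ hγ => by rw [(Finset.mem_filter.1 hγ).2]
  rw [h1, Finset.sum_const, nsmul_eq_mul]
  congr 2
  have hsep : P.Separable := PerfectField.separable_of_irreducible hPi
  have hcard : Fintype.card E = Nat.card K ^ n := by
    rw [Fintype.card_eq_nat_card, Module.natCard_eq_pow_finrank (K := K)]
  have hsplit : (P.map (algebraMap K E)).Splits := by
    have h2 : (X ^ Fintype.card E - X : E[X]).Splits := by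
      simpa using (FiniteField.isSplittingField_sub E K).splits
    refine h2.of_dvd (FiniteField.X_pow_card_sub_X_ne_zero E Fintype.one_lt_card) ?_
    have := Polynomial.map_dvd (algebraMap K E) (hPi.natDegree_dvd_iff_dvd_X_pow_card_pow_sub_X.1 hPn)
    simpa [hcard] using this
  rw [← card_rootSet_eq_natDegree hsep hsplit, ← Set.toFinset_card]
  congr 1
  ext γ
  rw [Finset.mem_filter, Set.mem_toFinset, mem_rootSet_of_ne hPi.ne_zero]
  constructor
  · rintro ⟨-, rfl⟩
    exact minpoly.aeval K γ
  · intro h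
    exact ⟨mem_univ _, (minpoly.eq_of_irreducible_of_monic hPi h hPm).symm⟩

theorem norm_sub_algebraMap {K E : Type*} [Field K] [Field E] [Algebra K E]
    [FiniteDimensional K E] (γ : E) (a : K) :
    Algebra.norm K (γ - algebraMap K E a) = (-1) ^ Module.finrank K E *
      ((minpoly K γ).eval a) ^ (Module.finrank K E / (minpoly K γ).natDegree) := by
  set x := γ - algebraMap K E a with hx
  have hint : IsIntegral K x := Algebra.IsIntegral.isIntegral x
  have hmin : minpoly K x = (minpoly K γ).comp (X + C a) := minpoly.sub_algebraMap γ a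
  have hdeg : (minpoly K x).natDegree = (minpoly K γ).natDegree := by
    rw [hmin, natDegree_comp, natDegree_X_add_C, mul_one]
  have hgen := Algebra.PowerBasis.norm_gen_eq_coeff_zero_minpoly
    (IntermediateField.adjoin.powerBasis hint)
  rw [IntermediateField.adjoin.powerBasis_gen, IntermediateField.minpoly_gen,
    ← PowerBasis.finrank, IntermediateField.adjoin.finrank hint] at hgen
  have hmul := Module.finrank_mul_finrank K (IntermediateField.adjoin K {x}) E
  rw [IntermediateField.adjoin.finrank hint] at hmul
  have hpos : 0 < (minpoly K x).natDegree := minpoly.natDegree_pos hint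
  have hcoeff : (minpoly K x).coeff 0 = (minpoly K γ).eval a := by
    rw [hmin, coeff_zero_eq_eval_zero, eval_comp]; simp
  rw [Algebra.norm_eq_norm_adjoin K x, hgen, ← hdeg, ← hmul, Nat.mul_div_cancel_left _ hpos,
    mul_pow, ← pow_mul, hcoeff]

/-- The completely multiplicative function `g ↦ ∏ χ(g(αᵢ)) ^ eᵢ` on polynomials. -/
noncomputable def evalCharProd {K ι : Type*} [Field K] (s : Finset ι) (α : ι → K) (e : ι → ℕ)
    (χ : MulChar K ℂ) : K[X] →* ℂ :=
  ∏ i ∈ s, (χ.toMonoidHom.comp (evalRingHom (α i) : K[X] →* K)) ^ e i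

section

variable {K ι : Type*} [Field K] [Fintype K] (s : Finset ι) (α : ι → K) (e : ι → ℕ)
  (χ : MulChar K ℂ)

omit [Fintype K] in
theorem evalCharProd_apply (g : K[X]) :
    evalCharProd s α e χ g = ∏ i ∈ s, χ (g.eval (α i)) ^ e i := by
  simp [evalCharProd, MonoidHom.finsetProd_apply]

theorem sum_prod_norm_sub {E : Type*} [Field E] [Fintype E] [Algebra K E] :
    ∑ γ : E, ∏ i ∈ s, χ (Algebra.norm K (γ - algebraMap K E (α i))) ^ e i =
      (∏ i ∈ s, χ (-1) ^ e i) ^ Module.finrank K E *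
        primePowerSum (evalCharProd s α e χ) (Module.finrank K E) := by
  classical
  rw [primePowerSum, ← sum_apply_minpoly (E := E) (fun P => evalCharProd s α e χ P ^
    (Module.finrank K E / P.natDegree)), Finset.mul_sum]
  refine Finset.sum_congr rfl fun γ _ => ?_
  rw [evalCharProd_apply, ← Finset.prod_pow, ← Finset.prod_pow, ← Finset.prod_mul_distrib]
  refine Finset.prod_congr rfl fun i _ => ?_
  rw [norm_sub_algebraMap, map_mul, map_pow, map_pow]
  ring

omit [Fintype K] in
theorem norm_prod_map_neg_one_pow : ‖∏ i ∈ s, χ (-1) ^ e i‖ = 1 := by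
  have h : ‖χ (-1)‖ = 1 := by
    have : ‖χ (-1)‖ ^ 2 = 1 := by
      rw [← norm_pow, ← map_pow]; simp
    exact (pow_eq_one_iff_of_nonneg (norm_nonneg _) two_ne_zero).1 this
  simp [norm_prod, h]

theorem monicSum_evalCharProd_eq_zero (hα : Set.InjOn α s) (hs : s.Nonempty)
    (he : ∀ i ∈ s, χ ^ e i ≠ 1) {n : ℕ} (hn : #s ≤ n) :
    monicSum (evalCharProd s α e χ) n = 0 := by
  classical
  obtain ⟨i₀, hi₀⟩ := hs
  have hei : e i₀ ≠ 0 := fun h => he i₀ hi₀ (by rw [h, pow_zero])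
  set h : K[X] := ∏ j ∈ s.erase i₀, (X - C (α j)) with hh
  have hdeg : h.natDegree < n := by
    rw [hh, natDegree_prod_of_monic _ _ fun j _ => monic_X_sub_C _]
    simp only [natDegree_X_sub_C, Finset.sum_const, smul_eq_mul, mul_one]
    rw [Finset.card_erase_of_mem hi₀]
    have := Finset.card_pos.2 ⟨i₀, hi₀⟩
    omega
  have hz : ∀ j ∈ s.erase i₀, h.eval (α j) = 0 := fun j hj => by
    rw [hh, eval_prod]
    exact Finset.prod_eq_zero hj (by simp)
  have hu : h.eval (α i₀) ≠ 0 := by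
    rw [hh, eval_prod]
    refine Finset.prod_ne_zero_iff.2 fun j hj => ?_
    rw [eval_sub, eval_X, eval_C, sub_ne_zero]
    exact fun e => (Finset.mem_erase.1 hj).1 (hα (Finset.mem_erase.1 hj).2 hi₀ e.symm)
  have hmem : ∀ (c : K) (g : K[X]), g ∈ monicsOfDegree K n → g + C c * h ∈ monicsOfDegree K n := by
    intro c g hg
    obtain ⟨h1, h2⟩ := mem_monicsOfDegree.1 hg
    have hlt : (C c * h).natDegree < g.natDegree := by
      rw [h2]; exact (natDegree_C_mul_le c h).trans_lt hdeg
    exact mem_monicsOfDegree.2 ⟨h1.add_of_left (degree_lt_degree hlt),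
      by rw [natDegree_add_eq_left_of_natDegree_lt hlt, h2]⟩
  have hshift : ∀ c : K, monicSum (evalCharProd s α e χ) n =
      ∑ g ∈ monicsOfDegree K n, evalCharProd s α e χ (g + C c * h) := by
    intro c
    symm
    refine Finset.sum_bij (fun g _ => g + C c * h) (hmem c) ?_ ?_ fun _ _ => rfl
    · intro a _ b _ hab
      exact add_right_cancel hab
    · intro g hg
      refine ⟨g + C (-c) * h, hmem _ _ hg, ?_⟩
      simp
  have hsum : ∑ _c : K, monicSum (evalCharProd s α e χ) n = 0 := by
    rw [Finset.sum_congr rfl fun c _ => hshift c, Finset.sum_comm]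
    refine Finset.sum_eq_zero fun g _ => ?_
    have : ∀ c : K, evalCharProd s α e χ (g + C c * h) =
        (∏ j ∈ s.erase i₀, χ (g.eval (α j)) ^ e j) *
          (χ ^ e i₀) (g.eval (α i₀) + c * h.eval (α i₀)) := by
      intro c
      rw [evalCharProd_apply, ← Finset.prod_erase_mul _ _ hi₀]
      congr 1
      · refine Finset.prod_congr rfl fun j hj => ?_
        rw [eval_add, eval_mul, hz j hj, mul_zero, add_zero]
      · rw [MulChar.pow_apply' _ hei, eval_add, eval_mul, eval_C]
    rw [Finset.sum_congr rfl fun c _ => this c, ← Finset.mul_sum]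
    have hc := ((Equiv.mulRight₀ _ hu).trans (Equiv.addLeft (g.eval (α i₀)))).sum_comp
      (fun x => (χ ^ e i₀) x)
    simp only [Equiv.trans_apply, Equiv.mulRight₀_apply, Equiv.coe_addLeft] at hc
    rw [hc, MulChar.sum_eq_zero_of_ne_one (he i₀ hi₀), mul_zero]
  rw [Finset.sum_const, nsmul_eq_mul, Finset.card_univ] at hsum
  exact (mul_eq_zero.1 hsum).resolve_left (by simp)

variable {χ} in
theorem norm_sum_prod_le_of_coprime (hα : Set.InjOn α s) (hs : s.Nonempty) {d : ℕ} (hd : 2 ≤ d)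
    (hdq : d ∣ Fintype.card K - 1) (hχ : orderOf χ = d) (he0 : ∀ i ∈ s, 0 < e i)
    (hed : ∀ i ∈ s, e i < d) (he : ∀ r, r ∣ d → (∀ i ∈ s, r ∣ e i) → r = 1) :
    ‖∑ γ : K, ∏ i ∈ s, χ (γ - α i) ^ e i‖ ≤ ((#s - 1 : ℕ) : ℝ) * √(Fintype.card K) := by
  set q := Fintype.card K with hq
  set f : K[X] := ∏ i ∈ s, (X - C (α i)) ^ e i with hf
  have hε := norm_prod_map_neg_one_pow s e χ
  have hχe : ∀ i ∈ s, χ ^ e i ≠ 1 := fun i hi h => by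
    have := Nat.le_of_dvd (he0 i hi) (orderOf_dvd_of_pow_eq_one h)
    have := hed i hi
    omega
  have hS1 : ‖primePowerSum (evalCharProd s α e χ) 1‖ =
      ‖∑ γ : K, ∏ i ∈ s, χ (γ - α i) ^ e i‖ := by
    have h1 := sum_prod_norm_sub s α e χ (E := K)
    simp only [Module.finrank_self, Algebra.norm_self, MonoidHom.id_apply, Algebra.algebraMap_self,
      RingHom.id_apply] at h1
    rw [h1, norm_mul, norm_pow, hε, one_pow, one_mul]
  rw [← hS1]
  have hq0 : (0 : ℝ) < q := by exact_mod_cast Fintype.card_pos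
  have hq2 : 1 < q := Fintype.one_lt_card
  refine norm_le_of_newton (monicSum (evalCharProd s α e χ)) _ #s (monicSum_zero _)
    (fun n hn => monicSum_evalCharProd_eq_zero s α e χ hα hs hχe hn) (mul_monicSum_eq _)
    hq0 (C := ((d * (3 * f.natDegree + 1) + f.natDegree : ℕ) : ℝ)) (2 * f.natDegree * d + 1) ?_
  intro m hm
  obtain ⟨p, hp⟩ := CharP.exists K
  have : Fact p.Prime := ⟨CharP.char_is_prime K p⟩
  have : NeZero (2 * m) := ⟨by omega⟩
  let : Fintype (FiniteField.Extension K p (2 * m)) := Fintype.ofFinite _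
  have h1 := sum_prod_norm_sub s α e χ (E := FiniteField.Extension K p (2 * m))
  rw [FiniteField.finrank_extension] at h1
  have h2 : ‖primePowerSum (evalCharProd s α e χ) (2 * m)‖ =
      ‖∑ γ : FiniteField.Extension K p (2 * m), χ (Algebra.norm K (aeval γ f))‖ := by
    have h3 : ‖primePowerSum (evalCharProd s α e χ) (2 * m)‖ =
        ‖(∏ i ∈ s, χ (-1) ^ e i) ^ (2 * m) * primePowerSum (evalCharProd s α e χ) (2 * m)‖ := by
      rw [norm_mul, norm_pow, hε, one_pow, one_mul]
    rw [h3, ← h1]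
    congr 1
    refine Finset.sum_congr rfl fun γ _ => ?_
    simp [hf, map_prod]
  rw [h2]
  have hlt : 2 * f.natDegree * d + 1 < q ^ m :=
    lt_of_le_of_lt hm (Nat.lt_pow_self hq2)
  have hE : Fintype.card (FiniteField.Extension K p (2 * m)) = (q ^ m) ^ 2 := by
    rw [Fintype.card_eq_nat_card, FiniteField.natCard_extension, ← Fintype.card_eq_nat_card,
      ← pow_mul, mul_comm]
  have := norm_sum_norm_aeval_le (E := FiniteField.Extension K p (2 * m)) s α hα e hd hdq χ hχ he
    hf rfl hE hlt
  simpa using this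

variable {χ} in
/-- The Weil bound for mixed products of powers of a multiplicative character. -/
theorem norm_sum_prod_le (hα : Set.InjOn α s) (hs : s.Nonempty) {d : ℕ}
    (hdq : d ∣ Fintype.card K - 1) (hχ : orderOf χ = d) (he0 : ∀ i ∈ s, 0 < e i)
    (hed : ∀ i ∈ s, e i < d) :
    ‖∑ γ : K, ∏ i ∈ s, χ (γ - α i) ^ e i‖ ≤ ((#s - 1 : ℕ) : ℝ) * √(Fintype.card K) := by
  obtain ⟨i₀, hi₀⟩ := hs
  set δ := Nat.gcd d (s.gcd e) with hδ
  have hδd : δ ∣ d := Nat.gcd_dvd_left _ _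
  have hδe : ∀ i ∈ s, δ ∣ e i := fun i hi => (Nat.gcd_dvd_right _ _).trans (Finset.gcd_dvd hi)
  have hδ0 : 0 < δ := Nat.pos_of_dvd_of_pos (hδe i₀ hi₀) (he0 i₀ hi₀)
  have hdd : δ * (d / δ) = d := Nat.mul_div_cancel' hδd
  have hee : ∀ i ∈ s, δ * (e i / δ) = e i := fun i hi => Nat.mul_div_cancel' (hδe i hi)
  have he0' : ∀ i ∈ s, 0 < e i / δ := fun i hi =>
    Nat.div_pos (Nat.le_of_dvd (he0 i hi) (hδe i hi)) hδ0
  have hed' : ∀ i ∈ s, e i / δ < d / δ := fun i hi => by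
    have := hed i hi
    rw [← hdd, ← hee i hi] at this
    exact Nat.lt_of_mul_lt_mul_left this
  have hord : orderOf (χ ^ δ) = d / δ := by
    rw [orderOf_pow_of_dvd hδ0.ne' (hχ ▸ hδd), hχ]
  have key := norm_sum_prod_le_of_coprime s α (fun i => e i / δ) (χ := χ ^ δ) hα ⟨i₀, hi₀⟩
    (d := d / δ) (by have := he0' i₀ hi₀; have := hed' i₀ hi₀; omega)
    ((Nat.div_dvd_of_dvd hδd).trans hdq) hord he0' hed' (by
      intro r hr hre
      have h1 : δ * r ∣ δ := by
        refine Nat.dvd_gcd ?_ (Finset.dvd_gcd fun i hi => ?_)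
        · rw [← hdd]; exact mul_dvd_mul_left _ hr
        · rw [← hee i hi]; exact mul_dvd_mul_left _ (hre i hi)
      have h2 := Nat.le_of_dvd hδ0 h1
      have h3 : r ≠ 0 := by
        rintro rfl
        have := Nat.eq_zero_of_zero_dvd (hre i₀ hi₀)
        have := he0' i₀ hi₀
        omega
      have : r ≤ 1 := Nat.le_of_mul_le_mul_left (by omega) hδ0
      omega)
  refine le_of_eq_of_le (congrArg norm ?_) key
  refine Finset.sum_congr rfl fun γ _ => Finset.prod_congr rfl fun i hi => ?_
  rw [MulChar.pow_apply' _ hδ0.ne', ← pow_mul, hee i hi]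

end

end

theorem exists_real_eq_sum_map_pow {F : Type*} [Field F] {χ : MulChar F ℂ} {d : ℕ}
    (hχ : χ ^ d = 1) (hd : 0 < d) (x : F) :
    ∃ r : ℝ, ∑ j ∈ Icc 1 (d - 1), χ (x ^ j) = r := by
  simp only [map_pow]
  have h := Finset.sum_range_succ' (fun j => χ x ^ j) (d - 1)
  rw [Nat.sub_add_cancel hd] at h
  have h1 : ∑ j ∈ Icc 1 (d - 1), χ x ^ j = ∑ j ∈ range (d - 1), χ x ^ (j + 1) := by
    refine Finset.sum_nbij' (· - 1) (· + 1) ?_ ?_ ?_ ?_ ?_ <;>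
      intro j hj <;> simp only [Finset.mem_Icc, Finset.mem_range] at hj ⊢
    · omega
    · omega
    · omega
    · omega
    · rw [Nat.sub_add_cancel hj.1]
  rcases eq_or_ne x 0 with rfl | hx
  · refine ⟨0, Finset.sum_eq_zero fun j hj => ?_⟩
    rw [MulChar.map_zero, zero_pow (by have := Finset.mem_Icc.1 hj; omega)]
  · have hz : χ x ^ d = 1 := by
      rw [← MulChar.pow_apply' _ hd.ne', hχ, MulChar.one_apply hx.isUnit]
    by_cases h2 : χ x = 1
    · exact ⟨(d - 1 : ℕ), by simp [h2]⟩
    · have h3 := geom_sum_eq h2 d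
      rw [hz, sub_self, zero_div] at h3
      refine ⟨-1, ?_⟩
      rw [h1]
      push_cast
      linear_combination h3 - h

theorem MulChar.norm_apply_le_one {F : Type*} [Field F] [Finite F] (χ : MulChar F ℂ) (x : F) :
    ‖χ x‖ ≤ 1 := by
  have := Fintype.ofFinite F
  rcases eq_or_ne x 0 with rfl | hx
  · simp
  · have h : ‖χ x‖ ^ (Fintype.card F - 1) = 1 := by
      rw [← norm_pow, ← map_pow, FiniteField.pow_card_sub_one_eq_one x hx]; simp
    have := Fintype.one_lt_card (α := F)
    exact ((pow_eq_one_iff_of_nonneg (norm_nonneg _) (by omega)).1 h).le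

theorem norm_sum_prod_sum_le {F : Type*} [Field F] [Fintype F] {χ : MulChar F ℂ} {d : ℕ}
    (hχ : orderOf χ = d) (hdvd : d ∣ Fintype.card F - 1) {B : Finset F} (hB : B.Nonempty) :
    ‖∑ γ, ∏ α ∈ B, ∑ j ∈ Icc 1 (d - 1), χ ((γ - α) ^ j)‖ ≤
      ((d - 1 : ℕ) : ℝ) ^ #B * (((#B : ℝ) - 1) * √(Fintype.card F)) := by
  classical
  simp_rw [Finset.prod_sum]
  rw [Finset.sum_comm]
  have hcard : #(B.pi fun _ => Icc 1 (d - 1)) = (d - 1) ^ #B := by simp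
  refine (norm_sum_le _ _).trans ?_
  rw [← Nat.cast_pow, ← hcard, ← nsmul_eq_mul]
  refine Finset.sum_le_card_nsmul _ _ _ fun p hp => ?_
  have hp' : ∀ i ∈ B.attach, 0 < p i.1 i.2 ∧ p i.1 i.2 < d := fun i _ => by
    have := Finset.mem_Icc.1 (Finset.mem_pi.1 hp i.1 i.2)
    omega
  have key := norm_sum_prod_le B.attach Subtype.val (fun i => p i.1 i.2)
    (χ := χ) (Subtype.val_injective.injOn) (by simpa using hB) hdvd hχ
    (fun i hi => (hp' i hi).1) (fun i hi => (hp' i hi).2)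
  rw [Finset.card_attach, Nat.cast_sub hB.card_pos, Nat.cast_one] at key
  simpa only [map_pow] using key

theorem norm_sum_sdiff_prod_sum_le {F : Type*} [Field F] [Fintype F] [DecidableEq F]
    {χ : MulChar F ℂ} {d : ℕ} (hχ : orderOf χ = d) (hdvd : d ∣ Fintype.card F - 1)
    {A B : Finset F} (hBA : B ⊆ A) (hB : B.Nonempty) :
    ‖∑ γ ∈ univ \ A, ∏ α ∈ B, ∑ j ∈ Icc 1 (d - 1), χ ((γ - α) ^ j)‖ ≤
      ((d - 1 : ℕ) : ℝ) ^ #B * (((#B : ℝ) - 1) * √(Fintype.card F) + (#A - #B)) := by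
  set T : F → ℂ := fun γ => ∏ α ∈ B, ∑ j ∈ Icc 1 (d - 1), χ ((γ - α) ^ j) with hT
  have hT0 : ∀ γ ∈ B, T γ = 0 := fun γ hγ => by
    refine Finset.prod_eq_zero hγ (Finset.sum_eq_zero fun j hj => ?_)
    rw [sub_self, zero_pow (by have := Finset.mem_Icc.1 hj; omega), MulChar.map_zero]
  have hT1 : ∀ γ, ‖T γ‖ ≤ ((d - 1 : ℕ) : ℝ) ^ #B := fun γ => by
    rw [hT, norm_prod]
    refine (Finset.prod_le_prod (fun _ _ => norm_nonneg _) fun α _ => ?_).trans_eq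
      (Finset.prod_const _)
    refine (norm_sum_le _ _).trans ?_
    have := Finset.sum_le_card_nsmul (Icc 1 (d - 1)) (fun j => ‖χ ((γ - α) ^ j)‖) 1
      fun j _ => χ.norm_apply_le_one _
    simpa using this
  have h1 : ∑ γ ∈ univ \ A, T γ = ∑ γ, T γ - ∑ γ ∈ A \ B, T γ := by
    rw [← Finset.sum_sdiff (Finset.subset_univ A), ← Finset.sum_sdiff hBA,
      Finset.sum_eq_zero hT0]
    ring
  have h2 : ‖∑ γ ∈ A \ B, T γ‖ ≤ ((#A : ℝ) - #B) * ((d - 1 : ℕ) : ℝ) ^ #B := by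
    refine (norm_sum_le _ _).trans ((Finset.sum_le_card_nsmul _ _ _ fun γ _ => hT1 γ).trans ?_)
    rw [nsmul_eq_mul, Finset.card_sdiff_of_subset hBA, Nat.cast_sub (Finset.card_le_card hBA)]
  rw [h1]
  refine (norm_sub_le _ _).trans ?_
  have := norm_sum_prod_sum_le hχ hdvd hB
  linarith

theorem two_mul_sum_powerset_card {ι : Type*} (A : Finset ι) :
    2 * ∑ B ∈ A.powerset, #B = #A * 2 ^ #A := by
  classical
  have h : ∑ B ∈ A.powerset, #B = ∑ B ∈ A.powerset, #(A \ B) := by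
    refine Finset.sum_nbij' (fun B => A \ B) (fun B => A \ B) ?_ ?_ ?_ ?_ ?_ <;>
      simp only [Finset.mem_powerset]
    · exact fun _ _ => Finset.sdiff_subset
    · exact fun _ _ => Finset.sdiff_subset
    · exact fun B hB => Finset.sdiff_sdiff_eq_self hB
    · exact fun B hB => Finset.sdiff_sdiff_eq_self hB
    · exact fun B hB => by rw [Finset.sdiff_sdiff_eq_self hB]
  rw [two_mul]
  nth_rewrite 2 [h]
  rw [← Finset.sum_add_distrib, Finset.sum_congr rfl (g := fun _ => #A), Finset.sum_const,
    Finset.card_powerset, smul_eq_mul, mul_comm]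
  intro B hB
  rw [add_comm, Finset.card_sdiff_add_card_eq_card (Finset.mem_powerset.1 hB)]

/-- For a subset `A` of the finite field with `q` elements with `|A| ≥ 2`, an integer
`2 ≤ d ≤ |A|` dividing `q - 1`, and a multiplicative character `χ` of order `d`, the sum
`S(d; q, A) = ∑_{γ ∈ F_q \ A} ∏_{α ∈ A} ((d-1) - ∑_{j=1}^{d-1} χ((γ-α)^j))` is real and
satisfies `S(d; q, A) ≥ (d-1)^{|A|} (q - (2^{|A|-1}(|A|-2) + 1)√q - 2^{|A|} |A|)`. -/
theorem char_sum_S_lower_bound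
    (q d : ℕ) (hq : IsPrimePow q)
    (F : Type*) [Field F] [Fintype F] [DecidableEq F] (hF : Fintype.card F = q)
    (A : Finset F) (hA : 2 ≤ A.card) (hd2 : 2 ≤ d) (hdA : d ≤ A.card) (hdvd : d ∣ q - 1)
    (χ : MulChar F ℂ) (hχ : orderOf χ = d) :
    (∑ γ ∈ univ \ A, ∏ α ∈ A,
        (((d : ℂ) - 1) - ∑ j ∈ Finset.Icc 1 (d - 1), χ ((γ - α) ^ j))).im = 0 ∧
      ((d : ℝ) - 1) ^ A.card *
          ((q : ℝ) - (2 ^ (A.card - 1) * ((A.card : ℝ) - 2) + 1) * Real.sqrt q -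
            2 ^ A.card * A.card) ≤
        (∑ γ ∈ univ \ A, ∏ α ∈ A,
          (((d : ℂ) - 1) - ∑ j ∈ Finset.Icc 1 (d - 1), χ ((γ - α) ^ j))).re := by
  constructor
  · have h : ∀ x : F, ∃ r : ℝ, ∑ j ∈ Icc 1 (d - 1), χ (x ^ j) = r := fun x =>
      exists_real_eq_sum_map_pow (hχ ▸ pow_orderOf_eq_one χ) (by omega) x
    choose r hr using h
    simp only [hr]
    have : ∑ γ ∈ univ \ A, ∏ α ∈ A, (((d : ℂ) - 1) - (r (γ - α) : ℂ)) =
        ((∑ γ ∈ univ \ A, ∏ α ∈ A, (((d : ℝ) - 1) - r (γ - α)) : ℝ) : ℂ) := by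
      push_cast; rfl
    rw [this, Complex.ofReal_im]
  · subst hF
    set n := #A with hn
    set c : ℝ := ((d - 1 : ℕ) : ℝ) with hc
    have hcd : (d : ℝ) - 1 = c := by rw [hc, Nat.cast_sub (by omega), Nat.cast_one]
    have hcdC : (d : ℂ) - 1 = ((c : ℝ) : ℂ) := by rw [← hcd]; push_cast; rfl
    have hc0 : 0 ≤ c := Nat.cast_nonneg _
    set Q := √(Fintype.card F : ℝ) with hQ
    set W : Finset F → ℂ := fun B =>
      ∑ γ ∈ univ \ A, ∏ α ∈ B, ∑ j ∈ Icc 1 (d - 1), χ ((γ - α) ^ j) with hW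
    have hexp : ∑ γ ∈ univ \ A, ∏ α ∈ A,
        (((d : ℂ) - 1) - ∑ j ∈ Icc 1 (d - 1), χ ((γ - α) ^ j)) =
        ∑ B ∈ A.powerset, ((c ^ (n - #B) * (-1) ^ #B : ℝ) : ℂ) * W B := by
      simp_rw [hW, Finset.mul_sum]
      rw [Finset.sum_comm]
      refine Finset.sum_congr rfl fun γ _ => ?_
      have := Finset.prod_add (fun α => -∑ j ∈ Icc 1 (d - 1), χ ((γ - α) ^ j))
        (fun _ => (d : ℂ) - 1) A
      simp_rw [neg_add_eq_sub] at this
      rw [this]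
      refine Finset.sum_congr rfl fun B hB => ?_
      rw [Finset.prod_neg, Finset.prod_const, Finset.card_sdiff_of_subset (Finset.mem_powerset.1 hB), hcdC]
      push_cast
      ring
    set b : Finset F → ℝ := fun B => ((#B : ℝ) - 1) * Q + (n - #B) with hb
    have hterm : ∀ B ∈ A.powerset,
        c ^ n * ((if B = ∅ then (Fintype.card F : ℝ) - Q else 0) - b B) ≤
          (((c ^ (n - #B) * (-1) ^ #B : ℝ) : ℂ) * W B).re := by
      intro B hB
      have hBA := Finset.mem_powerset.1 hB
      rcases B.eq_empty_or_nonempty with rfl | hne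
      · have hW0 : W ∅ = (((Fintype.card F : ℝ) - n : ℝ) : ℂ) := by
          simp only [hW, Finset.prod_empty, Finset.sum_const, nsmul_eq_mul, mul_one]
          rw [Finset.card_sdiff_of_subset (Finset.subset_univ A),
            Nat.cast_sub (Finset.card_le_card (Finset.subset_univ A)), Finset.card_univ]
          push_cast; rfl
        rw [hW0, ← Complex.ofReal_mul, Complex.ofReal_re]
        simp only [hb, Finset.card_empty, if_true, Nat.sub_zero, pow_zero, mul_one, Nat.cast_zero]
        exact le_of_eq (by ring)
      · rw [if_neg hne.ne_empty, zero_sub, Complex.re_ofReal_mul]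
        have h1 := norm_sum_sdiff_prod_sum_le hχ hdvd hBA hne
        have h2 := (Complex.abs_re_le_norm _).trans h1
        have h3 : |c ^ (n - #B) * (-1) ^ #B * (W B).re| ≤ c ^ n * b B := by
          rw [abs_mul, abs_mul, abs_pow, abs_pow, abs_neg, abs_one, one_pow, mul_one,
            abs_of_nonneg hc0]
          calc _ ≤ c ^ (n - #B) * (c ^ #B * b B) :=
                mul_le_mul_of_nonneg_left h2 (pow_nonneg hc0 _)
            _ = c ^ n * b B := by
              rw [← mul_assoc, ← pow_add, Nat.sub_add_cancel (Finset.card_le_card hBA)]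
        have := (abs_le.1 h3).1
        linarith
    rw [hexp, Complex.re_sum, hcd]
    refine le_trans ?_ (Finset.sum_le_sum hterm)
    rw [← Finset.mul_sum]
    refine mul_le_mul_of_nonneg_left ?_ (pow_nonneg hc0 _)
    rw [Finset.sum_sub_distrib, Finset.sum_ite_eq', if_pos (Finset.empty_mem_powerset A)]
    have hsum : ∑ B ∈ A.powerset, b B = (Q - 1) * (∑ B ∈ A.powerset, #B : ℕ) + 2 ^ n * (n - Q) := by
      have : ∀ B ∈ A.powerset, b B = (Q - 1) * (#B : ℕ) + (n - Q) := fun B _ => by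
        simp only [hb]; ring
      rw [Finset.sum_congr rfl this, Finset.sum_add_distrib, ← Finset.mul_sum, Finset.sum_const,
        Finset.card_powerset, nsmul_eq_mul]
      push_cast
      ring
    have h2 : (2 : ℝ) * (∑ B ∈ A.powerset, #B : ℕ) = n * 2 ^ n := by
      exact_mod_cast two_mul_sum_powerset_card A
    have hpow : (2 : ℝ) ^ n = 2 * 2 ^ (n - 1) := by
      rw [← pow_succ', Nat.sub_add_cancel (by omega)]
    have h3 : ((∑ B ∈ A.powerset, #B : ℕ) : ℝ) = n * 2 ^ (n - 1) := by
      rw [hpow] at h2; linarith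
    rw [hsum, h3, hpow]
    have h4 : (0 : ℝ) ≤ n * 2 ^ (n - 1) := by positivity
    nlinarith
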